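/- arXiv:1104.3090 — 2 statements merged into one kernel-verified Lean document; each statement's English description precedes it below -/
import Mathlib

section
/- Let G = (V,E) be a 2-vertex-connected simple graph on at least 3 vertices equipped with a removable pairing (R,P), and let s,t ∈ V. Then G has a walk from s to t that visits every vertex of G and has length at most (4/3)·|E| − (2/3)·|R| + dist_G(s,t)/3, where dist_G(s,t) denotes the graph distance between s and t in G. -/
open SimpleGraph

namespace RP
open Classical

section core
variable {ι V : Type*}

/-- indicator of a vertex mod 2 -/
noncomputable def sg (x : V) : V → ZMod 2 := Pi.single x 1

/-- mod 2 boundary of an edge set -/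
noncomputable def bd (a b : ι → V) (F : Finset ι) : V → ZMod 2 :=
  ∑ i ∈ F, (sg (a i) + sg (b i))

/-- edge `i` crosses the cut `W` -/
def cr (a b : ι → V) (W : V → Prop) (i : ι) : Prop := ¬ (W (a i) ↔ W (b i))

lemma two0 : (2 : V → ZMod 2) = 0 := by
  funext v; exact (by decide : (2 : ZMod 2) = 0)

lemma bd_empty (a b : ι → V) : bd a b ∅ = 0 := by simp [bd]

lemma bd_singleton (a b : ι → V) (i : ι) : bd a b {i} = sg (a i) + sg (b i) := by simp [bd]

lemma bd_insert (a b : ι → V) {i : ι} {F : Finset ι} (h : i ∉ F) :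
    bd a b (insert i F) = sg (a i) + sg (b i) + bd a b F := by simp [bd, h]

lemma bd_sdiff (a b : ι → V) {K J : Finset ι} (h : K ⊆ J) :
    bd a b (J \ K) = bd a b J + bd a b K := by
  have := Finset.sum_sdiff (f := fun i => sg (a i) + sg (b i)) h
  unfold bd
  linear_combination this - (∑ i ∈ K, (sg (a i) + sg (b i))) * two0 (V := V)

lemma bd_union (a b : ι → V) {K J : Finset ι} (h : Disjoint K J) :
    bd a b (K ∪ J) = bd a b K + bd a b J := by
  simp [bd, Finset.sum_union h]

lemma symmDiff_eq' (K J : Finset ι) : symmDiff K J = (K \ J) ∪ (J \ K) := rfl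

lemma disj_sd (K J : Finset ι) : Disjoint (K \ J) (J \ K) := disjoint_sdiff_sdiff

lemma sum_symmDiff {M : Type*} [CommRing M] (f : ι → M) (K J : Finset ι) :
    ∑ i ∈ symmDiff K J, f i = ∑ i ∈ K, f i + ∑ i ∈ J, f i - 2 * ∑ i ∈ K ∩ J, f i := by
  rw [symmDiff_eq', Finset.sum_union (disj_sd K J)]
  have h1 := Finset.sum_inter_add_sum_sdiff K J f
  have h2 := Finset.sum_inter_add_sum_sdiff J K f
  rw [Finset.inter_comm J K] at h2
  linear_combination h1 + h2

lemma bd_symmDiff (a b : ι → V) (K J : Finset ι) :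
    bd a b (symmDiff K J) = bd a b K + bd a b J := by
  unfold bd
  rw [sum_symmDiff]
  linear_combination (- ∑ i ∈ K ∩ J, (sg (a i) + sg (b i))) * two0 (V := V)

lemma bd_apply (a b : ι → V) (F : Finset ι) (v : V) :
    bd a b F v = ∑ i ∈ F, ((if a i = v then 1 else 0) + (if b i = v then 1 else 0)) := by
  simp [bd, sg, Finset.sum_apply, Pi.single_apply, eq_comm]

lemma sg_self (x : V) : sg x x = 1 := by simp [sg]
lemma sg_ne {x y : V} (h : y ≠ x) : sg x y = 0 := by simp [sg, h]

lemma sum_W_sg [Fintype V] (W : V → Prop) (x : V) :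
    (∑ v, if W v then sg x v else 0) = if W x then 1 else 0 := by
  rw [Finset.sum_eq_single x]
  · simp [sg_self]
  · intro y _ hy; simp [sg_ne hy]
  · simp

lemma handshake [Fintype V] (a b : ι → V) (F : Finset ι) (W : V → Prop) :
    (∑ v, if W v then bd a b F v else 0) = ((F.filter (cr a b W)).card : ZMod 2) := by
  induction F using Finset.induction_on with
  | empty => simp [bd]
  | insert i F hi ih =>
    have : (∑ v, if W v then bd a b (insert i F) v else 0) =
        (∑ v, if W v then sg (a i) v else 0) + (∑ v, if W v then sg (b i) v else 0)
          + (∑ v, if W v then bd a b F v else 0) := by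
      rw [← Finset.sum_add_distrib, ← Finset.sum_add_distrib]
      refine Finset.sum_congr rfl fun v _ => ?_
      rw [bd_insert a b hi]
      by_cases h : W v <;> simp [h]
    rw [this, ih, sum_W_sg, sum_W_sg, Finset.filter_insert]
    have h11 : (1 + 1 : ZMod 2) = 0 := by decide
    by_cases h1 : W (a i) <;> by_cases h2 : W (b i) <;> simp [cr, h1, h2, hi, h11, add_comm]

lemma even_cr [Fintype V] {a b : ι → V} {F : Finset ι} (h : bd a b F = 0) (W : V → Prop) :
    Even (F.filter (cr a b W)).card := by
  have := handshake a b F W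
  rw [h] at this
  simp only [Pi.zero_apply, ite_self, Finset.sum_const_zero] at this
  exact (ZMod.natCast_eq_zero_iff_even).1 this.symm

lemma exists_cr [Fintype V] {a b : ι → V} {F : Finset ι} {x y : V} (h : bd a b F = sg x + sg y)
    (W : V → Prop) (hx : W x) (hy : ¬ W y) : ∃ i ∈ F, cr a b W i := by
  by_contra hcon
  push Not at hcon
  have := handshake a b F W
  rw [Finset.filter_false_of_mem hcon, h] at this
  have h2 : (∑ v, if W v then (sg x + sg y) v else 0) =
        (∑ v, if W v then sg x v else 0) + (∑ v, if W v then sg y v else 0) := by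
    rw [← Finset.sum_add_distrib]
    refine Finset.sum_congr rfl fun v _ => ?_
    by_cases h : W v <;> simp [h]
  rw [h2, sum_W_sg, sum_W_sg] at this
  simp [hx, hy] at this

/-- reachability through edge subsets of `S` -/
def Rch (a b : ι → V) (S : Finset ι) (r w : V) : Prop :=
  ∃ Q ⊆ S, bd a b Q = sg r + sg w

lemma rch_refl (a b : ι → V) (S : Finset ι) (r : V) : Rch a b S r r :=
  ⟨∅, by simp, by rw [bd_empty]; linear_combination (- sg r) * two0 (V := V)⟩

lemma rch_closed (a b : ι → V) (S : Finset ι) (r : V) {i : ι} (hi : i ∈ S) :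
    ¬ cr a b (Rch a b S r) i := by
  unfold cr
  rw [not_not]
  have key : ∀ Q ⊆ S, symmDiff Q {i} ⊆ S := by
    intro Q hQ j hj
    rw [Finset.mem_symmDiff] at hj
    rcases hj with h | h
    · exact hQ h.1
    · rw [Finset.mem_singleton.1 h.1]; exact hi
  constructor
  · rintro ⟨Q, hQ, h⟩
    refine ⟨symmDiff Q {i}, key Q hQ, ?_⟩
    rw [bd_symmDiff, bd_singleton, h]
    linear_combination (sg (a i)) * two0 (V := V)
  · rintro ⟨Q, hQ, h⟩
    refine ⟨symmDiff Q {i}, key Q hQ, ?_⟩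
    rw [bd_symmDiff, bd_singleton, h]
    linear_combination (sg (b i)) * two0 (V := V)

/-- crossing edges as oriented edges -/
lemma cr_ends {a b : ι → V} {W : V → Prop} {i : ι} (h : cr a b W i) :
    ∃ x y, W x ∧ ¬ W y ∧ sg (a i) + sg (b i) = sg x + sg y ∧
      ((a i = x ∧ b i = y) ∨ (a i = y ∧ b i = x)) := by
  unfold cr at h
  by_cases h1 : W (a i)
  · have h2 : ¬ W (b i) := by tauto
    exact ⟨a i, b i, h1, h2, rfl, Or.inl ⟨rfl, rfl⟩⟩
  · have h2 : W (b i) := by tauto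
    exact ⟨b i, a i, h2, h1, add_comm _ _, Or.inr ⟨rfl, rfl⟩⟩

lemma sg_inj {x y : V} (h : sg x + sg y = 0) : x = y := by
  by_contra hne
  have := congrFun h x
  simp [sg_self, sg_ne hne] at this

lemma bd_zero_of_notouch {a b : ι → V} {F : Finset ι} {v : V}
    (h : ∀ i ∈ F, a i ≠ v ∧ b i ≠ v) : bd a b F v = 0 := by
  rw [bd_apply]
  refine Finset.sum_eq_zero fun i hi => ?_
  simp [(h i hi).1, (h i hi).2]

end core
end RP

open SimpleGraph

namespace RP
open Classical

section core2
variable {ι V : Type*}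

/-- data of a lexicographically minimal join -/
lemma exists_min_join [Fintype ι] [Fintype V] (a b : ι → V) (c : ι → ℤ)
    (hneg : ∃ i, c i < 0) :
    ∃ s v J, bd a b J = sg s + sg v ∧ ∑ i ∈ J, c i < 0 ∧
      ∀ s' v' J', bd a b J' = sg s' + sg v' →
        ∑ i ∈ J, c i ≤ ∑ i ∈ J', c i ∧
        (∑ i ∈ J', c i = ∑ i ∈ J, c i → J.card ≤ J'.card) := by
  obtain ⟨i, hi⟩ := hneg
  let S : Finset (V × V × Finset ι) :=
    Finset.univ.filter fun p => bd a b p.2.2 = sg p.1 + sg p.2.1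
  have hiS : (a i, b i, ({i} : Finset ι)) ∈ S := by simp [S, bd_singleton]
  obtain ⟨⟨s, v, J⟩, hm, hmin⟩ := Finset.exists_min_image S
    (fun p => (toLex (∑ i ∈ p.2.2, c i, p.2.2.card) : ℤ ×ₗ ℕ)) ⟨_, hiS⟩
  have key : ∀ s' v' J', bd a b J' = sg s' + sg v' →
        ∑ i ∈ J, c i ≤ ∑ i ∈ J', c i ∧
        (∑ i ∈ J', c i = ∑ i ∈ J, c i → J.card ≤ J'.card) := by
    intro s' v' J' h
    have := hmin (s', v', J') (by simp [S, h])
    rw [Prod.Lex.toLex_le_toLex] at this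
    rcases this with h | h
    · exact ⟨h.le, fun h' => by simp only at h; omega⟩
    · exact ⟨h.1.le, fun _ => h.2⟩
  refine ⟨s, v, J, by simpa [S] using hm, ?_, key⟩
  have := (key (a i) (b i) {i} (bd_singleton a b i)).1
  simp at this
  omega

lemma rch_touch {a b : ι → V} {S : Finset ι} {r v : V} (hr : r ≠ v)
    (h : ∀ i ∈ S, a i ≠ v ∧ b i ≠ v) : ¬ Rch a b S r v := by
  rintro ⟨Q, hQ, hb⟩
  have h0 := bd_zero_of_notouch (a := a) (b := b) (F := Q) (v := v) (fun i hi => h i (hQ hi))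
  rw [hb] at h0
  simp [sg_self, sg_ne hr.symm] at h0

/-- an even set meeting the star of `v` contains an even set meeting it exactly twice -/
lemma exists_two [Fintype ι] [Fintype V] {a b : ι → V} {C : Finset ι} (hC : bd a b C = 0)
    {v : V} {e : ι} (he : e ∈ C) (hev : cr a b (· = v) e) :
    ∃ K ⊆ C, bd a b K = 0 ∧ e ∈ K ∧ (K.filter (cr a b (· = v))).card = 2 := by
  obtain ⟨_, w1, rfl, hw1, hsg, hends⟩ := cr_ends hev
  rename_i v
  set S := C.filter (fun i => a i ≠ v ∧ b i ≠ v) with hS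
  have hSt : ∀ i ∈ S, a i ≠ v ∧ b i ≠ v := fun i hi => (Finset.mem_filter.1 hi).2
  have hvW : ¬ Rch a b S w1 v := rch_touch hw1 hSt
  have hw1W : Rch a b S w1 w1 := rch_refl a b S w1
  have hecr : cr a b (Rch a b S w1) e := by
    unfold cr
    rcases hends with ⟨h1, h2⟩ | ⟨h1, h2⟩ <;> rw [h1, h2] <;> tauto
  have hev := even_cr hC (Rch a b S w1)
  have hemem : e ∈ C.filter (cr a b (Rch a b S w1)) := by simp [he, hecr]
  have h1lt : 1 < (C.filter (cr a b (Rch a b S w1))).card := by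
    have : 0 < (C.filter (cr a b (Rch a b S w1))).card := Finset.card_pos.2 ⟨e, hemem⟩
    obtain ⟨k, hk⟩ := hev
    omega
  obtain ⟨g, hg, hge⟩ := Finset.exists_mem_ne h1lt e
  rw [Finset.mem_filter] at hg
  obtain ⟨w, y, hw, hy, hsg2, hends2⟩ := cr_ends hg.2
  have hyv : y = v := by
    have hgS : g ∉ S := fun h => rch_closed a b S w1 h hg.2
    have : w ≠ v := fun h => hvW (h ▸ hw)
    simp only [hS, Finset.mem_filter, hg.1, true_and] at hgS
    rcases hends2 with ⟨h1, h2⟩ | ⟨h1, h2⟩ <;> rw [h1, h2] at hgS <;> tauto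
  subst hyv
  obtain ⟨Q, hQ, hQb⟩ := hw
  have htQ : ∀ i ∈ Q, a i ≠ y ∧ b i ≠ y := fun i hi => hSt i (hQ hi)
  have hgQ : g ∉ Q := by
    intro h; have := htQ g h
    rcases hends2 with ⟨h1, h2⟩ | ⟨h1, h2⟩ <;> tauto
  have heQ : e ∉ Q := by
    intro h; have := htQ e h
    rcases hends with ⟨h1, h2⟩ | ⟨h1, h2⟩ <;> tauto
  have heg : e ∉ insert g Q := by simp [heQ, hge.symm]
  have hwy : w ≠ y := by
    rintro rfl; exact hvW ⟨Q, hQ, hQb⟩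
  refine ⟨insert e (insert g Q), ?_, ?_, by simp, ?_⟩
  · intro i hi
    simp only [Finset.mem_insert] at hi
    rcases hi with rfl | rfl | hi
    · exact he
    · exact hg.1
    · exact (Finset.mem_filter.1 (hQ hi)).1
  · rw [bd_insert a b heg, bd_insert a b hgQ, hQb, hsg, hsg2]
    linear_combination (sg y + sg w1 + sg w) * two0 (V := V)
  · have h0 : Q.filter (cr a b (· = y)) = ∅ := by
      refine Finset.filter_false_of_mem fun i hi => ?_
      have := htQ i hi
      simp [cr, this.1, this.2]
    have h1 : cr a b (· = y) g := by
      unfold cr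
      rcases hends2 with ⟨h1, h2⟩ | ⟨h1, h2⟩ <;> rw [h1, h2] <;> simp [hwy]
    have h2 : cr a b (· = y) e := by assumption
    rw [Finset.filter_insert, if_pos h2, Finset.filter_insert, if_pos h1, h0]
    rw [Finset.card_insert_of_notMem (by simp [hge.symm])]
    simp

/-- restriction of a closed set to a union of components -/
lemma bd_restrict {a b : ι → V} {C : Finset ι} (hC : bd a b C = 0) (W : V → Prop)
    (hW : ∀ i ∈ C, ¬ cr a b W i) : bd a b (C.filter (fun i => W (a i))) = 0 := by
  funext w
  have h := congrFun hC w
  rw [bd_apply] at h ⊢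
  by_cases hw : W w
  · rw [← h]
    rw [Finset.sum_filter]
    refine Finset.sum_congr rfl fun i hi => ?_
    have hi := hW i hi
    unfold cr at hi
    rw [not_not] at hi
    split_ifs <;> simp_all
  · refine Finset.sum_eq_zero fun i hi => ?_
    rw [Finset.mem_filter] at hi
    have h2 := hW i hi.1
    unfold cr at h2
    rw [not_not] at h2
    have h3 := h2.1 hi.2
    rw [if_neg, if_neg]
    · simp
    · rintro rfl; exact hw h3
    · rintro rfl; exact hw hi.2

lemma unit_step [Fintype ι] [Fintype V] (a b : ι → V) (c : ι → ℤ)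
    (hcons : ∀ C, bd a b C = 0 → 0 ≤ ∑ i ∈ C, c i)
    (hpar : ∀ C, bd a b C = 0 → Even (∑ i ∈ C, c i))
    (hz : ∀ i, a i ≠ b i → c i ≠ 0) (hneg : ∃ i, c i < 0) :
    ∃ v f, cr a b (· = v) f ∧ c f < 0 ∧ (∀ i, cr a b (· = v) i → i ≠ f → 0 < c i) ∧
      ∀ C, bd a b C = 0 →
        ((C.filter (cr a b (· = v))).card : ℤ) ≤ ∑ i ∈ C, c i + if f ∈ C then 2 else 0 := by
  obtain ⟨s, v, J, hJ, hJneg, hmin⟩ := exists_min_join a b c hneg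
  have hsv : s ≠ v := by
    rintro rfl
    have : bd a b J = 0 := by rw [hJ]; linear_combination (sg s) * two0 (V := V)
    have := hcons J this
    omega
  -- sub-joins of J are J
  have hsub : ∀ K ⊆ J, bd a b K = sg s + sg v → K = J := by
    intro K hK hb
    have h0 := hcons (J \ K) (by
      rw [bd_sdiff a b hK, hJ, hb]; linear_combination (sg s + sg v) * two0 (V := V))
    have h1 := Finset.sum_sdiff (f := c) hK
    have h2 := hmin s v K hb
    exact Finset.eq_of_subset_of_card_le hK (h2.2 (by omega))
  -- claim A
  have hA : ∀ K, bd a b K = sg s + sg v → ∑ i ∈ K, c i = ∑ i ∈ J, c i →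
      ∀ e, cr a b (· = v) e → (e ∈ K ↔ c e < 0) := by
    intro K hK hKc e he
    obtain ⟨v', w, hv', hw, hsg, hends⟩ := cr_ends he
    rw [show v' = v from hv'] at hsg hends
    have hne : a e ≠ b e := by
      rcases hends with ⟨h1, h2⟩ | ⟨h1, h2⟩ <;> rw [h1, h2]
      · exact fun h => hw h.symm
      · exact hw
    have hce := hz e hne
    have hb : bd a b (symmDiff K {e}) = sg s + sg w := by
      rw [bd_symmDiff, bd_singleton, hsg, hK]
      linear_combination (sg v) * two0 (V := V)
    have := (hmin _ _ _ hb).1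
    rw [sum_symmDiff, Finset.sum_singleton] at this
    by_cases heK : e ∈ K
    · rw [Finset.inter_singleton_of_mem heK, Finset.sum_singleton] at this
      simp only [heK, true_iff]; omega
    · rw [Finset.inter_singleton_of_notMem heK, Finset.sum_empty] at this
      simp only [heK, false_iff]; omega
  -- claim B
  obtain ⟨f, hfJ, hfv, hfu⟩ : ∃ f ∈ J, cr a b (· = v) f ∧
      ∀ i ∈ J, cr a b (· = v) i → i = f := by
    set S := J.filter (fun i => a i ≠ v ∧ b i ≠ v) with hS
    have hSt : ∀ i ∈ S, a i ≠ v ∧ b i ≠ v := fun i hi => (Finset.mem_filter.1 hi).2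
    have hvW : ¬ Rch a b S s v := rch_touch hsv hSt
    obtain ⟨g, hg, hgcr⟩ := exists_cr hJ (Rch a b S s) (rch_refl a b S s) hvW
    obtain ⟨w, y, hw, hy, hsg2, hends2⟩ := cr_ends hgcr
    have hyv : y = v := by
      have hgS : g ∉ S := fun h => rch_closed a b S s h hgcr
      have : w ≠ v := fun h => hvW (h ▸ hw)
      simp only [hS, Finset.mem_filter, hg, true_and] at hgS
      rcases hends2 with ⟨h1, h2⟩ | ⟨h1, h2⟩ <;> rw [h1, h2] at hgS <;> tauto
    subst hyv
    obtain ⟨Q, hQ, hQb⟩ := hw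
    have htQ : ∀ i ∈ Q, a i ≠ y ∧ b i ≠ y := fun i hi => hSt i (hQ hi)
    have hgQ : g ∉ Q := by
      intro h; have := htQ g h
      rcases hends2 with ⟨h1, h2⟩ | ⟨h1, h2⟩ <;> tauto
    have hwy : w ≠ y := by
      rintro rfl; exact hvW ⟨Q, hQ, hQb⟩
    have hK := hsub (insert g Q) (by
        intro i hi
        rcases Finset.mem_insert.1 hi with rfl | hi
        · exact hg
        · exact (Finset.mem_filter.1 (hQ hi)).1) (by
        rw [bd_insert a b hgQ, hQb, hsg2]
        linear_combination (sg w) * two0 (V := V))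
    refine ⟨g, hg, ?_, ?_⟩
    · unfold cr
      rcases hends2 with ⟨h1, h2⟩ | ⟨h1, h2⟩ <;> rw [h1, h2] <;> simp [hwy]
    · intro i hi hicr
      rw [← hK, Finset.mem_insert] at hi
      rcases hi with rfl | hi
      · rfl
      · have := htQ i hi
        exact absurd hicr (by simp [cr, this.1, this.2])
  have hfneg : c f < 0 := (hA J hJ rfl f hfv).1 hfJ
  have hpos : ∀ i, cr a b (· = v) i → i ≠ f → 0 < c i := by
    intro i hi hif
    have h1 : i ∉ J := fun h => hif (hfu i h hi)
    have h2 := (hA J hJ rfl i hi).not.1 h1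
    have hne : a i ≠ b i := by
      intro h; unfold cr at hi; rw [h] at hi; exact hi Iff.rfl
    have := hz i hne
    omega
  -- claim D
  have hD : ∀ n (C : Finset ι), C.card = n → bd a b C = 0 → f ∉ C →
      (∃ e ∈ C, cr a b (· = v) e) → ∑ i ∈ C, c i ≠ 0 := by
    intro n
    induction n using Nat.strong_induction_on with
    | _ n ih =>
    rintro C hCn hC hfC ⟨e1, he1, he1v⟩ hC0
    by_cases hs : Rch a b (J \ C) v s
    · obtain ⟨Q, hQ, hQb⟩ := hs
      have hQJ := hsub Q (hQ.trans Finset.sdiff_subset) (by rw [hQb, add_comm])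
      have hdis : Disjoint J C := by
        rw [Finset.disjoint_left]
        intro i hi
        rw [← hQJ] at hi
        exact (Finset.mem_sdiff.1 (hQ hi)).2
      have h1 := hA (J ∪ C) (by rw [bd_union a b hdis, hJ, hC, add_zero])
        (by rw [Finset.sum_union hdis, hC0, add_zero]) e1 he1v
      have h2 := hpos e1 he1v (fun h => hfC (h ▸ he1))
      have := h1.1 (Finset.mem_union_right _ he1)
      omega
    · obtain ⟨g, hg, hgcr⟩ := exists_cr (x := v) (y := s) (by rw [hJ, add_comm])
        (Rch a b (J \ C) v) (rch_refl a b _ v) hs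
      have hgC : g ∈ C := by
        by_contra h
        exact rch_closed a b (J \ C) v (Finset.mem_sdiff.2 ⟨hg, h⟩) hgcr
      obtain ⟨y, z, hy, hzW, hsg, hends⟩ := cr_ends hgcr
      have hzv : z ≠ v := by rintro rfl; exact hzW (rch_refl a b _ _)
      have hyv : y ≠ v := by
        rintro rfl
        have : cr a b (· = y) g := by
          unfold cr
          rcases hends with ⟨h1, h2⟩ | ⟨h1, h2⟩ <;> rw [h1, h2] <;> simp [hzv]
        exact hfC (hfu g hg this ▸ hgC)
      by_cases hyR : Rch a b C v y
      · obtain ⟨Q, hQ, hQb⟩ := hy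
        obtain ⟨C1, hC1, hC1b⟩ := hyR
        have hQJ : Q ⊆ J := hQ.trans Finset.sdiff_subset
        have hQC : Disjoint Q C := by
          rw [Finset.disjoint_left]
          intro i hi
          exact (Finset.mem_sdiff.1 (hQ hi)).2
        have hQne : 0 < Q.card := by
          rw [Finset.card_pos, Finset.nonempty_iff_ne_empty]
          rintro rfl
          rw [bd_empty] at hQb
          exact hyv (sg_inj hQb.symm).symm
        have hm := hmin s y (J \ Q) (by
          rw [bd_sdiff a b hQJ, hJ, hQb]; linear_combination (sg v) * two0 (V := V))
        have hs1 := Finset.sum_sdiff (f := c) hQJ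
        have hcd := Finset.card_sdiff_add_card_eq_card hQJ
        have hQneg : ∑ i ∈ Q, c i < 0 := by
          by_contra hcon
          have := hm.2 (by omega)
          omega
        have hd1 : Disjoint Q C1 := Finset.disjoint_of_subset_right hC1 hQC
        have hd2 : Disjoint Q (C \ C1) := Finset.disjoint_of_subset_right Finset.sdiff_subset hQC
        have e1 := hcons (Q ∪ C1) (by
          rw [bd_union a b hd1, hQb, hC1b]
          linear_combination (sg v + sg y) * two0 (V := V))
        have e2 := hcons (Q ∪ (C \ C1)) (by
          rw [bd_union a b hd2, bd_sdiff a b hC1, hQb, hC1b, hC]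
          linear_combination (sg v + sg y) * two0 (V := V))
        rw [Finset.sum_union hd1] at e1
        rw [Finset.sum_union hd2] at e2
        have hs2 := Finset.sum_sdiff (f := c) hC1
        omega
      · -- restrict to component of v
        set D := C.filter (fun i => Rch a b C v (a i)) with hDdef
        have hDC : D ⊆ C := Finset.filter_subset _ _
        have hDb : bd a b D = 0 := bd_restrict hC _ (fun i hi => rch_closed a b C v hi)
        have hgD : g ∉ D := by
          intro h
          have h1 := (Finset.mem_filter.1 h).2
          have h2 := rch_closed a b C v hgC
          unfold cr at h2
          rw [not_not] at h2
          rcases hends with ⟨h3, h4⟩ | ⟨h3, h4⟩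
          · exact hyR (h3 ▸ h1)
          · exact hyR (h4 ▸ h2.1 h1)
        have hlt : D.card < n := by
          rw [← hCn]
          exact Finset.card_lt_card ⟨hDC, fun h => hgD (h hgC)⟩
        have n1 := hcons D hDb
        have n2 := hcons (C \ D) (by rw [bd_sdiff a b hDC, hC, hDb, add_zero])
        have hs2 := Finset.sum_sdiff (f := c) hDC
        refine ih D.card hlt D rfl hDb (fun h => hfC (hDC h)) ⟨e1, ?_, he1v⟩ (by omega)
        rw [hDdef, Finset.mem_filter]
        refine ⟨he1, ?_⟩
        have h2 := rch_closed a b C v he1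
        unfold cr at h2
        rw [not_not] at h2
        obtain ⟨_, w, rfl, hw, hsg', hends'⟩ := cr_ends he1v
        rcases hends' with ⟨h3, h4⟩ | ⟨h3, h4⟩
        · rw [h3]; exact rch_refl a b C _
        · rw [h2, h4]; exact rch_refl a b C _
  refine ⟨v, f, hfv, hfneg, hpos, ?_⟩
  -- claim F
  intro C
  induction hn : C.card using Nat.strong_induction_on generalizing C with
  | _ n ih =>
  intro hC
  by_cases hmeet : ∃ e ∈ C, cr a b (· = v) e
  · obtain ⟨e, he, hev⟩ := hmeet
    obtain ⟨K, hKC, hK, heK, hK2⟩ := exists_two hC he hev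
    have hKmain : (2 : ℤ) ≤ ∑ i ∈ K, c i + if f ∈ K then 2 else 0 := by
      have h0 := hcons K hK
      split_ifs with hfK
      · omega
      · have h1 := hD _ K rfl hK hfK ⟨e, heK, hev⟩
        obtain ⟨k, hk⟩ := hpar K hK
        omega
    have hlt : (C \ K).card < n := by
      rw [← hn]
      exact Finset.card_lt_card ⟨Finset.sdiff_subset, fun h => (Finset.mem_sdiff.1 (h he)).2 heK⟩
    have h1 := ih _ hlt (C \ K) rfl (by rw [bd_sdiff a b hKC, hC, hK, add_zero])
    have h2 := Finset.sum_sdiff (f := c) hKC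
    have h3 : (C.filter (cr a b (· = v))).card =
        ((C \ K).filter (cr a b (· = v))).card + (K.filter (cr a b (· = v))).card := by
      rw [← Finset.card_union_of_disjoint, ← Finset.filter_union, Finset.sdiff_union_of_subset hKC]
      exact Finset.disjoint_filter_filter Finset.sdiff_disjoint
    have h4 : (if f ∈ C then (2 : ℤ) else 0) =
        (if f ∈ C \ K then 2 else 0) + if f ∈ K then 2 else 0 := by
      by_cases hfK : f ∈ K
      · simp [hfK, hKC hfK]
      · simp [hfK]
    rw [h3, h4, hK2]
    push_cast
    omega
  · push Not at hmeet
    rw [Finset.filter_false_of_mem hmeet]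
    have := hcons C hC
    split_ifs <;> simp <;> omega

end core2
end RP

open SimpleGraph

namespace RP
open Classical

section core3
variable {ι V : Type*}

lemma contract_even [Fintype V] {a b : ι → V} {e : ι} (hne : a e ≠ b e) {F : Finset ι}
    (h : bd (fun i => if a i = b e then a e else a i) (fun i => if b i = b e then a e else b i) F
      = 0) : bd a b F = 0 ∨ bd a b (symmDiff F {e}) = 0 := by
  have hq : ∀ u w : V, w ≠ a e → w ≠ b e →
      (if (if u = b e then a e else u) = w then (1 : ZMod 2) else 0) = if u = w then 1 else 0 := by
    intro u w h1 h2
    by_cases hu : u = b e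
    · simp [hu, h1.symm, h2.symm]
    · simp [hu]
  have hq2 : ∀ u : V,
      (if (if u = b e then a e else u) = a e then (1 : ZMod 2) else 0) =
        (if u = a e then 1 else 0) + if u = b e then 1 else 0 := by
    intro u
    by_cases hu : u = b e
    · simp [hu, hne.symm]
    · simp [hu]
  have h1 : ∀ w, w ≠ a e → w ≠ b e → bd a b F w = 0 := by
    intro w hw1 hw2
    have := congrFun h w
    rw [bd_apply] at this ⊢
    simpa only [hq _ w hw1 hw2, Pi.zero_apply] using this
  have h2 : bd a b F (a e) + bd a b F (b e) = 0 := by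
    have := congrFun h (a e)
    rw [bd_apply] at this
    rw [bd_apply, bd_apply, ← Finset.sum_add_distrib]
    simp only [hq2, Pi.zero_apply] at this
    refine Eq.trans (Finset.sum_congr rfl fun i _ => by ring) this
  have h01 : ∀ z : ZMod 2, z = 0 ∨ z = 1 := by decide
  have h3 : bd a b F (b e) = bd a b F (a e) := by
    have : ∀ y z : ZMod 2, y + z = 0 → z = y := by decide
    exact this _ _ h2
  rcases h01 (bd a b F (a e)) with h0 | h0
  · left
    funext w
    by_cases hw1 : w = a e
    · rw [hw1, h0]; rfl
    by_cases hw2 : w = b e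
    · rw [hw2, h3, h0]; rfl
    exact h1 w hw1 hw2
  · right
    rw [bd_symmDiff, bd_singleton]
    funext w
    have h11 : (1 + 1 : ZMod 2) = 0 := by decide
    by_cases hw1 : w = a e
    · rw [hw1]; simp [h0, sg_self, sg_ne hne, h11]
    by_cases hw2 : w = b e
    · rw [hw2]; simp [h3, h0, sg_self, sg_ne hne.symm, h11]
    simp [h1 w hw1 hw2, sg_ne hw1, sg_ne hw2]

theorem cone [Fintype ι] [Fintype V] (n : ℕ) : ∀ (a b : ι → V) (c x : ι → ℤ),
    (∑ i, (c i).natAbs + (Finset.univ.filter fun i => a i ≠ b i).card = n) →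
    (∀ C, bd a b C = 0 → 0 ≤ ∑ i ∈ C, c i) →
    (∀ C, bd a b C = 0 → Even (∑ i ∈ C, c i)) →
    (∀ i, 0 ≤ x i) →
    (∀ (W : V → Prop) i, cr a b W i →
      2 * x i ≤ ∑ j ∈ Finset.univ.filter (cr a b W), x j) →
    0 ≤ ∑ i, c i * x i := by
  induction n using Nat.strong_induction_on with
  | _ n ih =>
  intro a b c x hn hcons hpar hx hcut
  by_cases hz : ∀ i, a i ≠ b i → c i ≠ 0
  swap
  · push Not at hz
    obtain ⟨e, hne, he⟩ := hz
    refine ih _ ?_ (fun i => if a i = b e then a e else a i)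
      (fun i => if b i = b e then a e else b i) c x rfl ?_ ?_ hx ?_
    · rw [← hn]
      refine Nat.add_lt_add_left (Finset.card_lt_card ⟨?_, ?_⟩) _
      · intro i
        simp only [Finset.mem_filter, Finset.mem_univ, true_and]
        intro h h'
        rw [h'] at h
        exact h rfl
      · intro h
        have := h (show e ∈ _ by simpa using hne)
        simp [hne] at this
    · intro C hC
      rcases contract_even hne hC with h | h
      · exact hcons _ h
      · have := hcons _ h
        rw [sum_symmDiff, Finset.sum_singleton, he] at this
        have h0 : ∑ i ∈ C ∩ {e}, c i = 0 := by
          refine Finset.sum_eq_zero fun i hi => ?_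
          rw [Finset.mem_singleton.1 (Finset.mem_inter.1 hi).2, he]
        omega
    · intro C hC
      rcases contract_even hne hC with h | h
      · exact hpar _ h
      · have := hpar _ h
        rw [sum_symmDiff, Finset.sum_singleton, he] at this
        have h0 : ∑ i ∈ C ∩ {e}, c i = 0 := by
          refine Finset.sum_eq_zero fun i hi => ?_
          rw [Finset.mem_singleton.1 (Finset.mem_inter.1 hi).2, he]
        rw [h0] at this
        simpa using this
    · intro W
      exact hcut (fun v => W (if v = b e then a e else v))
  by_cases hneg : ∃ i, c i < 0
  swap
  · push Not at hneg
    exact Finset.sum_nonneg fun i _ => mul_nonneg (hneg i) (hx i)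
  obtain ⟨v, f, hfv, hfneg, hpos, hmain⟩ := unit_step a b c hcons hpar hz hneg
  set d : ι → ℤ := fun i => (if cr a b (· = v) i then 1 else 0) - (if i = f then 2 else 0) with hd
  have hsumd : ∀ C : Finset ι, ∑ i ∈ C, (c i - d i) = ∑ i ∈ C, c i -
      ((C.filter (cr a b (· = v))).card : ℤ) + if f ∈ C then 2 else 0 := by
    intro C
    simp only [hd, Finset.sum_sub_distrib, Finset.sum_boole, Finset.sum_ite_eq']
    ring
  have hstep := ih (∑ i, (c i - d i).natAbs + (Finset.univ.filter fun i => a i ≠ b i).card) ?_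
    a b (fun i => c i - d i) x rfl ?_ ?_ hx hcut
  · have h1 : ∑ i, c i * x i = ∑ i, (c i - d i) * x i + ∑ i, d i * x i := by
      rw [← Finset.sum_add_distrib]
      exact Finset.sum_congr rfl fun i _ => by ring
    have h2 : ∑ i, d i * x i = ∑ j ∈ Finset.univ.filter (cr a b (· = v)), x j - 2 * x f := by
      simp only [hd, sub_mul, Finset.sum_sub_distrib, ite_mul, one_mul, zero_mul,
        Finset.sum_ite_eq', Finset.mem_univ, if_true, Finset.sum_filter]
    have h3 := hcut _ f hfv
    rw [h1, h2]
    linarith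
  · rw [← hn]
    refine Nat.add_lt_add_right (Finset.sum_lt_sum ?_ ⟨f, Finset.mem_univ _, ?_⟩) _
    · intro i _
      by_cases hif : i = f
      · subst hif; simp only [hd, hfv, if_true]; omega
      · by_cases hi : cr a b (· = v) i
        · have := hpos i hi hif
          simp only [hd, hi, hif, if_true, if_false]; omega
        · simp only [hd, hi, hif, if_false]; omega
    · simp only [hd, hfv, if_true]; omega
  · intro C hC
    have := hmain C hC
    rw [hsumd]
    linarith
  · intro C hC
    rw [hsumd]
    have h1 := hpar C hC
    have h2 : Even ((C.filter (cr a b (· = v))).card : ℤ) := by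
      exact_mod_cast even_cr hC (· = v)
    have h3 : Even (if f ∈ C then (2 : ℤ) else 0) := by split_ifs <;> decide
    exact (h1.sub h2).add h3

/-- In a bridgeless multigraph there is an even set carrying two thirds of the weight. -/
theorem two_thirds [Fintype ι] [Fintype V] (a b : ι → V) (c : ι → ℤ)
    (h2 : ∀ W : V → Prop, (Finset.univ.filter (cr a b W)).card ≠ 1) :
    ∃ K : Finset ι, bd a b K = 0 ∧ 2 * ∑ i ∈ Kᶜ, c i ≤ ∑ i ∈ K, c i := by
  obtain ⟨K, hK, hmax⟩ := Finset.exists_max_image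
    (Finset.univ.filter fun K : Finset ι => bd a b K = 0) (fun K => ∑ i ∈ K, c i)
    ⟨∅, by simp [bd_empty]⟩
  simp only [Finset.mem_filter, Finset.mem_univ, true_and] at hK hmax
  refine ⟨K, hK, ?_⟩
  have hsum : ∀ C : Finset ι, ∑ i ∈ C, (2 * if i ∈ K then c i else - c i) =
      2 * (∑ i ∈ K, c i - ∑ i ∈ symmDiff K C, c i) := by
    intro C
    rw [sum_symmDiff, ← Finset.mul_sum]
    congr 1
    have e1 : ∀ i, (if i ∈ K then c i else - c i) = 2 * (if i ∈ K then c i else 0) - c i := by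
      intro i; split_ifs <;> ring
    simp only [e1, Finset.sum_sub_distrib, ← Finset.mul_sum, ← Finset.sum_filter]
    rw [Finset.filter_mem_eq_inter, Finset.inter_comm]
    ring
  have := cone _ a b (fun i => 2 * if i ∈ K then c i else - c i) (fun i => if i ∈ K then 1 else 2)
    rfl ?_ ?_ ?_ ?_
  · have h3 : ∑ i, (2 * if i ∈ K then c i else - c i) * (if i ∈ K then 1 else 2) =
      2 * (∑ i ∈ K, c i - 2 * ∑ i ∈ Kᶜ, c i) := by
      rw [← Finset.sum_add_sum_compl K]
      rw [Finset.sum_congr rfl (g := fun i => 2 * c i) (fun i hi => by simp [hi]),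
        Finset.sum_congr (s₁ := Kᶜ) rfl (g := fun i => - 4 * c i)
          (fun i hi => by simp [Finset.mem_compl.1 hi]; ring)]
      rw [← Finset.mul_sum, ← Finset.mul_sum]; ring
    rw [h3] at this
    linarith
  · intro C hC
    rw [hsum]
    have := hmax (symmDiff K C) (by rw [bd_symmDiff, hK, hC, add_zero])
    linarith
  · intro C hC
    rw [hsum]
    exact even_two_mul _
  · intro i; split_ifs <;> norm_num
  · intro W i hi
    set D := Finset.univ.filter (cr a b W) with hD
    have hiD : i ∈ D := by simp [hD, hi]
    have hcard : 1 < D.card := by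
      have h2' : D.card ≠ 1 := h2 W
      have : 0 < D.card := Finset.card_pos.2 ⟨i, hiD⟩
      omega
    have hev : Even (K.filter (cr a b W)).card := even_cr hK W
    have hKD : K.filter (cr a b W) = D.filter (· ∈ K) := by
      ext j; simp [hD, and_comm]
    have hs : ∑ j ∈ D, (if j ∈ K then (1 : ℤ) else 2) =
        2 * D.card - (D.filter (· ∈ K)).card := by
      have e1 : ∀ j, (if j ∈ K then (1 : ℤ) else 2) = 2 - if j ∈ K then 1 else 0 := by
        intro j; split_ifs <;> ring
      simp only [e1, Finset.sum_sub_distrib, Finset.sum_boole]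
      simp [mul_comm]
    have hle : (D.filter (· ∈ K)).card ≤ D.card := Finset.card_filter_le _ _
    rw [hs]
    by_cases hiK : i ∈ K
    · simp only [hiK, if_true]; omega
    · simp only [hiK, if_false]
      rw [hKD] at hev
      obtain ⟨k, hk⟩ := hev
      have hlt : (D.filter (· ∈ K)).card < D.card :=
        Finset.card_lt_card ⟨Finset.filter_subset _ _, fun h =>
          hiK (Finset.mem_filter.1 (h hiD)).2⟩
      omega

end core3
end RP

open SimpleGraph

namespace RP
open Classical

section euler
variable {ι V : Type*}

/-- `w` is a trail that uses exactly the edges in `F` -/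
def Tr {G : SimpleGraph V} {a b : ι → V} (p : ∀ i, G.Walk (a i) (b i)) (F : Finset ι)
    {s t : V} (w : G.Walk s t) : Prop :=
  bd a b F = sg s + sg t ∧ w.length = ∑ i ∈ F, (p i).length ∧
    ∀ i ∈ F, a i ∈ w.support ∧ b i ∈ w.support

lemma exists_orient {G : SimpleGraph V} {a b : ι → V} (p : ∀ i, G.Walk (a i) (b i)) {i : ι}
    {x : V} (h : a i = x ∨ b i = x) :
    ∃ z, ∃ q : G.Walk x z, q.length = (p i).length ∧ a i ∈ q.support ∧ b i ∈ q.support ∧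
      sg (a i) + sg (b i) = sg x + sg z := by
  rcases h with rfl | rfl
  · exact ⟨b i, p i, rfl, by simp, by simp, rfl⟩
  · exact ⟨a i, (p i).reverse, by simp, by simp, by simp, add_comm _ _⟩

lemma tr_exists {G : SimpleGraph V} {a b : ι → V} (p : ∀ i, G.Walk (a i) (b i))
    {F : Finset ι} {s t : V} (hF : bd a b F = sg s + sg t) :
    ∃ F' ⊆ F, ∃ w : G.Walk s t, Tr p F' w := by
  obtain ⟨F', hF', hmax⟩ := Finset.exists_max_image
    (F.powerset.filter fun F' => ∃ u, ∃ w : G.Walk s u, Tr p F' w) (fun F' => F'.card)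
    ⟨∅, by
      simp only [Finset.mem_filter, Finset.empty_mem_powerset, true_and]
      refine ⟨s, Walk.nil, ?_, by simp, by simp⟩
      rw [bd_empty]; linear_combination (- sg s) * two0 (V := V)⟩
  simp only [Finset.mem_filter, Finset.mem_powerset] at hF' hmax
  obtain ⟨hsub, u, w, hb, hl, hs⟩ := hF'
  by_cases hut : u = t
  · subst hut; exact ⟨F', hsub, w, hb, hl, hs⟩
  exfalso
  have h1 : bd a b (F \ F') u = 1 := by
    rw [bd_sdiff a b hsub, hF, hb]
    have : sg s + sg t + (sg s + sg u) = sg t + sg u := by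
      linear_combination (sg s) * two0 (V := V)
    rw [this]
    simp [sg_self, sg_ne hut]
  have h2 : ∃ i ∈ F \ F', a i = u ∨ b i = u := by
    by_contra hcon
    push Not at hcon
    rw [bd_zero_of_notouch hcon] at h1
    exact absurd h1 (by decide)
  obtain ⟨i, hi, hiu⟩ := h2
  rw [Finset.mem_sdiff] at hi
  obtain ⟨z, q, hql, hqa, hqb, hsg⟩ := exists_orient p hiu
  have := hmax (insert i F') ⟨Finset.insert_subset hi.1 hsub, z, w.append q, ?_, ?_, ?_⟩
  · rw [Finset.card_insert_of_notMem hi.2] at this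
    omega
  · rw [bd_insert a b hi.2, hb, hsg]
    linear_combination (sg u) * two0 (V := V)
  · rw [Walk.length_append, Finset.sum_insert hi.2, hl, hql, add_comm]
  · intro j hj
    simp only [Walk.mem_support_append_iff]
    rcases Finset.mem_insert.1 hj with rfl | hj
    · exact ⟨Or.inr hqa, Or.inr hqb⟩
    · exact ⟨Or.inl (hs j hj).1, Or.inl (hs j hj).2⟩

theorem euler {G : SimpleGraph V} {a b : ι → V} (p : ∀ i, G.Walk (a i) (b i))
    {F : Finset ι} {s t : V} (hF : bd a b F = sg s + sg t)
    (hcon : ∀ W : V → Prop, W s → (∃ y, ¬ W y) → ∃ i ∈ F, cr a b W i) :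
    ∃ w : G.Walk s t, (∀ u, u ∈ w.support) ∧ w.length ≤ ∑ i ∈ F, (p i).length := by
  obtain ⟨F0, hF0, w0, hw0⟩ := tr_exists p hF
  obtain ⟨F', hF', hmax⟩ := Finset.exists_max_image
    (F.powerset.filter fun F' => ∃ w : G.Walk s t, Tr p F' w) (fun F' => F'.card)
    ⟨F0, by simp only [Finset.mem_filter, Finset.mem_powerset]; exact ⟨hF0, w0, hw0⟩⟩
  simp only [Finset.mem_filter, Finset.mem_powerset] at hF' hmax
  obtain ⟨hsub, w, hb, hl, hs⟩ := hF'
  refine ⟨w, ?_, ?_⟩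
  swap
  · rw [hl]; exact Finset.sum_le_sum_of_subset hsub
  by_contra hall
  push Not at hall
  obtain ⟨i, hiF, hicr⟩ := hcon (· ∈ w.support) (by simp) hall
  have hiF' : i ∉ F' := by
    intro h
    have := hs i h
    unfold cr at hicr
    tauto
  obtain ⟨x, y, hx, hy, hsg0, hends⟩ := cr_ends hicr
  have hiu : a i = x ∨ b i = x := by tauto
  obtain ⟨z, q, hql, hqa, hqb, hsg⟩ := exists_orient p hiu
  have hi1 : {i} ⊆ F \ F' := by simp [hiF, hiF']
  obtain ⟨F2, hF2, w2, hb2, hl2, hs2⟩ := tr_exists (F := (F \ F') \ {i}) (s := z) (t := x) p (by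
    rw [bd_sdiff a b hi1, bd_sdiff a b hsub, bd_singleton, hF, hb, hsg]
    linear_combination (sg s + sg t) * two0 (V := V))
  have hiF2 : i ∉ F2 := fun h => by simpa using hF2 h
  have hdis : Disjoint F' (insert i F2) := by
    rw [Finset.disjoint_left]
    intro j hj hj2
    rcases Finset.mem_insert.1 hj2 with rfl | hj2
    · exact hiF' hj
    · have := hF2 hj2
      simp only [Finset.mem_sdiff] at this
      exact this.1.2 hj
  have hlw : (w.takeUntil x hx).length + (w.dropUntil x hx).length = w.length := by
    rw [← Walk.length_append, Walk.take_spec]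
  have hsw : ∀ u ∈ w.support, u ∈ (w.takeUntil x hx).support ∨ u ∈ (w.dropUntil x hx).support := by
    intro u hu
    rwa [← Walk.mem_support_append_iff, Walk.take_spec]
  have := hmax (F' ∪ insert i F2) ⟨?_, (w.takeUntil x hx).append
    ((q.append w2).append (w.dropUntil x hx)), ?_, ?_, ?_⟩
  · rw [Finset.card_union_of_disjoint hdis, Finset.card_insert_of_notMem hiF2] at this
    omega
  · refine Finset.union_subset hsub (Finset.insert_subset hiF ?_)
    exact hF2.trans (Finset.sdiff_subset.trans Finset.sdiff_subset)
  · rw [bd_union a b hdis, bd_insert a b hiF2, hb, hb2, hsg]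
    linear_combination (sg x + sg z) * two0 (V := V)
  · rw [Finset.sum_union hdis, Finset.sum_insert hiF2, ← hl, ← hl2, ← hql, ← hlw]
    simp only [Walk.length_append]
    ring
  · intro j hj
    simp only [Walk.mem_support_append_iff]
    rcases Finset.mem_union.1 hj with hj | hj
    · have h1 := hsw _ (hs j hj).1
      have h2 := hsw _ (hs j hj).2
      tauto
    · rcases Finset.mem_insert.1 hj with rfl | hj
      · tauto
      · have := hs2 j hj
        tauto

end euler
end RP

open SimpleGraph

namespace RP
open Classical

section final
variable {V : Type*}

lemma conn_const {U : Type*} {G : SimpleGraph U} (h : G.Connected) (σ : U → Prop)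
    (hσ : ∀ x y, G.Adj x y → (σ x ↔ σ y)) (x y : U) : σ x ↔ σ y := by
  obtain ⟨w⟩ := h.preconnected x y
  induction w with
  | nil => rfl
  | cons hadj _ ih => exact (hσ _ _ hadj).trans ih

lemma push_even {ι U : Type*} [Fintype U] [Fintype V] {a b : ι → U} {K : Finset ι}
    (h : bd a b K = 0) (pr : U → V) : bd (fun i => pr (a i)) (fun i => pr (b i)) K = 0 := by
  funext u
  have h1 := handshake a b K (fun x => pr x = u)
  have h2 := handshake (fun i => pr (a i)) (fun i => pr (b i)) K (fun x => x = u)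
  rw [h] at h1
  simp only [Finset.sum_ite_eq', Finset.mem_univ, if_true] at h2
  rw [h2]
  simp only [Pi.zero_apply, ite_self, Finset.sum_const_zero] at h1
  exact h1.symm

variable {P : Finset (Finset (Sym2 V))}

/-- the end of the edge `e` at `x` after splitting off the pairs -/
noncomputable def port (vp : {p // p ∈ P} → V) (e : Sym2 V) (x : V) : V ⊕ {p // p ∈ P} :=
  if h : ∃ p : {p // p ∈ P}, e ∈ p.1 ∧ vp p = x then Sum.inr h.choose else Sum.inl x

/-- projection back to the original vertices -/
def prj (vp : {p // p ∈ P} → V) : V ⊕ {p // p ∈ P} → V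
  | Sum.inl x => x
  | Sum.inr p => vp p

lemma port_inr {vp : {p // p ∈ P} → V} {e : Sym2 V} {x : V} {p : {p // p ∈ P}}
    (h : port vp e x = Sum.inr p) : e ∈ p.1 ∧ vp p = x := by
  unfold port at h
  split_ifs at h with h1
  have := h1.choose_spec
  rw [Sum.inr.inj h] at this
  exact this

lemma port_eq {vp : {p // p ∈ P} → V} (hdisj : ∀ p ∈ P, ∀ q ∈ P, p ≠ q → Disjoint p q)
    {e : Sym2 V} {x : V} {p : {p // p ∈ P}} (he : e ∈ p.1) (hx : vp p = x) :
    port vp e x = Sum.inr p := by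
  have h1 : ∃ p : {p // p ∈ P}, e ∈ p.1 ∧ vp p = x := ⟨p, he, hx⟩
  unfold port
  rw [dif_pos h1]
  congr 1
  by_contra hne
  exact Finset.disjoint_left.1 (hdisj _ h1.choose.2 _ p.2 (fun h => hne (Subtype.ext h)))
    h1.choose_spec.1 he

lemma port_cases (vp : {p // p ∈ P} → V) (e : Sym2 V) (x : V) :
    port vp e x = Sum.inl x ∨ ∃ p, e ∈ p.1 ∧ vp p = x ∧ port vp e x = Sum.inr p := by
  rcases h : port vp e x with y | p
  · left
    unfold port at h
    split_ifs at h
    exact h.symm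
  · right
    have := port_inr h
    exact ⟨p, this.1, this.2, rfl⟩

lemma prj_port (vp : {p // p ∈ P} → V) (e : Sym2 V) (x : V) : prj vp (port vp e x) = x := by
  rcases port_cases vp e x with h | ⟨p, _, h2, h⟩
  · rw [h]; rfl
  · rw [h]; exact h2

variable {E : Finset (Sym2 V)}

/-- first ends of the split graph -/
noncomputable def endA (vp : {p // p ∈ P} → V) (a0 : {e // e ∈ E} → V) (s : V) :
    {e // e ∈ E} ⊕ {p // p ∈ P} ⊕ Unit → V ⊕ {p // p ∈ P}
  | Sum.inl e => port vp e.1 (a0 e)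
  | Sum.inr (Sum.inl p) => Sum.inr p
  | Sum.inr (Sum.inr _) => Sum.inl s

/-- second ends of the split graph -/
noncomputable def endB (vp : {p // p ∈ P} → V) (b0 : {e // e ∈ E} → V) (t : V) :
    {e // e ∈ E} ⊕ {p // p ∈ P} ⊕ Unit → V ⊕ {p // p ∈ P}
  | Sum.inl e => port vp e.1 (b0 e)
  | Sum.inr (Sum.inl p) => Sum.inl (vp p)
  | Sum.inr (Sum.inr _) => Sum.inl t

lemma bridgeless [Fintype V] {G : SimpleGraph V} (hE : ∀ e, e ∈ E ↔ e ∈ G.edgeSet)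
    (hcard : 3 ≤ Fintype.card V) (hconn : G.Connected)
    (h2vc : ∀ v : V, (G.induce {u : V | u ≠ v}).Connected)
    (hdisj : ∀ p ∈ P, ∀ q ∈ P, p ≠ q → Disjoint p q)
    (hPE : ∀ p ∈ P, p ⊆ E) (hPpair : ∀ p ∈ P, p.card = 2)
    (vp : {p // p ∈ P} → V) (hvp : ∀ p, ∀ e ∈ p.1, vp p ∈ e)
    (hthird : ∀ p, ∃ z, G.Adj (vp p) z ∧ s(vp p, z) ∉ p.1)
    (a0 b0 : {e // e ∈ E} → V) (hab : ∀ e, e.1 = s(a0 e, b0 e)) (s t : V)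
    (W : V ⊕ {p // p ∈ P} → Prop) :
    (Finset.univ.filter (cr (endA vp a0 s) (endB vp b0 t) W)).card ≠ 1 := by
  intro h1
  obtain ⟨g, hg⟩ := Finset.card_eq_one.1 h1
  have hcr : ∀ i, cr (endA vp a0 s) (endB vp b0 t) W i ↔ i = g := by
    intro i
    rw [← Finset.mem_singleton, ← hg]
    simp
  have hp : ∀ p, Sum.inr (Sum.inl p) ≠ g → (W (Sum.inr p) ↔ W (Sum.inl (vp p))) := by
    intro p h
    have := (hcr (Sum.inr (Sum.inl p))).not.2 h
    unfold cr at this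
    rw [not_not] at this
    exact this
  have he : ∀ x y (h : s(x, y) ∈ E), Sum.inl ⟨s(x, y), h⟩ ≠ g →
      (W (port vp s(x, y) x) ↔ W (port vp s(x, y) y)) := by
    intro x y h hne
    have := (hcr (Sum.inl ⟨s(x, y), h⟩)).not.2 hne
    unfold cr at this
    rw [not_not] at this
    simp only [endA, endB] at this
    have h2 := hab ⟨s(x, y), h⟩
    simp only at h2
    rcases Sym2.eq_iff.1 h2 with ⟨e1, e2⟩ | ⟨e1, e2⟩
    · rwa [← e1, ← e2] at this
    · rw [← e1, ← e2] at this
      exact this.symm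
  have hadjE : ∀ {x y}, G.Adj x y → s(x, y) ∈ E := fun h => (hE _).2 h
  have hport : ∀ e x, (∀ p, e ∈ p.1 → vp p = x → Sum.inr (Sum.inl p) ≠ g) →
      (W (port vp e x) ↔ W (Sum.inl x)) := by
    intro e x h
    rcases port_cases vp e x with h1 | ⟨p, h2, h3, h4⟩
    · rw [h1]
    · rw [h4, hp p (h p h2 h3), h3]
  rcases hgc : g with e0 | p0 | u
  · -- an original edge
    have hport' : ∀ e x, W (port vp e x) ↔ W (Sum.inl x) := fun e x =>
      hport e x (fun p _ _ => by rw [hgc]; simp)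
    have hedge : ∀ x y, G.Adj x y → s(x, y) ≠ e0.1 → (W (Sum.inl x) ↔ W (Sum.inl y)) := by
      intro x y h hne
      have := he x y (hadjE h) (by
        rw [hgc]; intro h'
        exact hne (congrArg Subtype.val (Sum.inl.inj h')))
      rwa [hport', hport'] at this
    have hxy : ¬ (W (Sum.inl (a0 e0)) ↔ W (Sum.inl (b0 e0))) := by
      have := (hcr (Sum.inl e0)).2 hgc.symm
      unfold cr at this
      simp only [endA, endB] at this
      rwa [hport', hport'] at this
    obtain ⟨z, _, hz⟩ := Finset.exists_mem_notMem_of_card_lt_card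
      (s := ({a0 e0, b0 e0} : Finset V)) (t := Finset.univ)
      (lt_of_le_of_lt Finset.card_le_two (by rw [Finset.card_univ]; omega))
    simp only [Finset.mem_insert, Finset.mem_singleton, not_or] at hz
    have hne : a0 e0 ≠ b0 e0 := by
      intro h; rw [h] at hxy; exact hxy Iff.rfl
    have key : ∀ v, v ∈ e0.1 → ∀ x y, x ≠ v → y ≠ v → (W (Sum.inl x) ↔ W (Sum.inl y)) := by
      intro v hv x y hx hy
      refine conn_const (h2vc v) (fun u => W (Sum.inl u.1)) ?_ ⟨x, hx⟩ ⟨y, hy⟩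
      intro u1 u2 hadj
      refine hedge _ _ hadj ?_
      intro h
      rw [← h] at hv
      rcases Sym2.mem_iff.1 hv with h | h
      · exact u1.2 h.symm
      · exact u2.2 h.symm
    have k1 := key (a0 e0) (by rw [hab e0]; simp) z (b0 e0) hz.1 hne.symm
    have k2 := key (b0 e0) (by rw [hab e0]; simp) z (a0 e0) hz.2 hne
    exact hxy (k2.symm.trans k1)
  · -- a pair edge
    have hcross : ¬ (W (Sum.inr p0) ↔ W (Sum.inl (vp p0))) :=
      (hcr (Sum.inr (Sum.inl p0))).2 hgc.symm
    have hport' : ∀ e x, x ≠ vp p0 → (W (port vp e x) ↔ W (Sum.inl x)) := fun e x hx =>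
      hport e x (fun p _ h2 => by
        rw [hgc]; intro h
        have : p = p0 := by simpa using h
        exact hx (by rw [← h2, this]))
    have hedge : ∀ x y, G.Adj x y → 
        (W (port vp s(x, y) x) ↔ W (port vp s(x, y) y)) := by
      intro x y h
      exact he x y (hadjE h) (by rw [hgc]; simp)
    have key : ∀ x y, x ≠ vp p0 → y ≠ vp p0 → (W (Sum.inl x) ↔ W (Sum.inl y)) := by
      intro x y hx hy
      refine conn_const (h2vc (vp p0)) (fun u => W (Sum.inl u.1)) ?_ ⟨x, hx⟩ ⟨y, hy⟩
      intro u1 u2 hadj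
      have := hedge u1.1 u2.1 hadj
      rwa [hport' _ _ u1.2, hport' _ _ u2.2] at this
    obtain ⟨z, hz, hzp⟩ := hthird p0
    have hpne : 0 < p0.1.card := by rw [hPpair p0.1 p0.2]; norm_num
    obtain ⟨e1, he1⟩ := Finset.card_pos.1 hpne
    obtain ⟨y, rfl⟩ := hvp p0 e1 he1
    have hy : G.Adj (vp p0) y := (hE _).1 (hPE _ p0.2 he1)
    have r1 := hedge _ _ hy
    rw [port_eq hdisj he1 rfl, hport' _ _ hy.ne'] at r1
    have r2 := hedge _ _ hz
    rw [hport _ _ (fun p h1 h2 => by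
      rw [hgc]; intro h
      have : p = p0 := by simpa using h
      exact hzp (this ▸ h1)), hport' _ _ hz.ne'] at r2
    have r3 := key y z hy.ne' hz.ne'
    exact hcross (r1.trans (r3.trans r2.symm))
  · -- the additional edge
    have hport' : ∀ e x, W (port vp e x) ↔ W (Sum.inl x) := fun e x =>
      hport e x (fun p _ _ => by rw [hgc]; simp)
    have hcross : ¬ (W (Sum.inl s) ↔ W (Sum.inl t)) :=
      (hcr (Sum.inr (Sum.inr u))).2 hgc.symm
    refine hcross (conn_const hconn (fun u => W (Sum.inl u)) ?_ s t)
    intro x y h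
    have := he x y (hadjE h) (by rw [hgc]; simp)
    rwa [hport', hport'] at this

/-- star of a pair vertex -/
lemma cr_pair {vp : {p // p ∈ P} → V} (hdisj : ∀ p ∈ P, ∀ q ∈ P, p ≠ q → Disjoint p q)
    (hvp : ∀ p, ∀ e ∈ p.1, vp p ∈ e)
    {a0 b0 : {e // e ∈ E} → V} (hab : ∀ e, e.1 = s(a0 e, b0 e)) (hne : ∀ e, a0 e ≠ b0 e)
    (s t : V) (p : {p // p ∈ P}) (e : {e // e ∈ E}) :
    cr (endA vp a0 s) (endB vp b0 t) (· = Sum.inr p) (Sum.inl e) ↔ e.1 ∈ p.1 := by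
  unfold cr
  simp only [endA, endB]
  constructor
  · intro h
    by_contra hcon
    refine h ⟨fun h => absurd (port_inr h).1 hcon, fun h => absurd (port_inr h).1 hcon⟩
  · intro h h2
    have h3 := hvp p _ h
    rw [hab e, Sym2.mem_iff] at h3
    rcases h3 with h3 | h3
    · have := port_inr (h2.1 (port_eq hdisj h h3))
      exact hne e (h3.symm.trans this.2)
    · have := port_inr (h2.2 (port_eq hdisj h h3))
      exact hne e (this.2.symm.trans h3)

lemma card_star (hPE : ∀ p ∈ P, p ⊆ E) (hPpair : ∀ p ∈ P, p.card = 2)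
    {vp : {p // p ∈ P} → V} (hdisj : ∀ p ∈ P, ∀ q ∈ P, p ≠ q → Disjoint p q)
    (hvp : ∀ p, ∀ e ∈ p.1, vp p ∈ e)
    {a0 b0 : {e // e ∈ E} → V} (hab : ∀ e, e.1 = s(a0 e, b0 e)) (hne : ∀ e, a0 e ≠ b0 e)
    (s t : V) (p : {p // p ∈ P}) :
    (Finset.univ.filter (cr (endA vp a0 s) (endB vp b0 t) (· = Sum.inr p))).card = 3 := by
  have h1 : Finset.univ.filter (cr (endA vp a0 s) (endB vp b0 t) (· = Sum.inr p)) =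
      insert (Sum.inr (Sum.inl p)) ((Finset.univ.filter fun e : {e // e ∈ E} => e.1 ∈ p.1).map
        ⟨Sum.inl, Sum.inl_injective⟩) := by
    ext i
    simp only [Finset.mem_filter, Finset.mem_univ, true_and, Finset.mem_insert, Finset.mem_map,
      Function.Embedding.coeFn_mk]
    rcases i with e | q | u
    · rw [cr_pair hdisj hvp hab hne]
      simp
    · simp [cr, endA, endB]
    · simp [cr, endA, endB]
  rw [h1, Finset.card_insert_of_notMem (by simp), Finset.card_map]
  have h2 : (Finset.univ.filter fun e : {e // e ∈ E} => e.1 ∈ p.1).card = p.1.card := by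
    rw [← Finset.card_map ⟨Subtype.val, Subtype.val_injective⟩]
    congr 1
    ext e
    simp only [Finset.mem_map, Finset.mem_filter, Finset.mem_univ, true_and,
      Function.Embedding.coeFn_mk, Subtype.exists, exists_and_left, exists_prop, exists_eq_right_right]
    constructor
    · intro h; simpa using h.1
    · intro h; exact ⟨h, hPE _ p.2 h⟩
  rw [h2, hPpair p.1 p.2]

end final
end RP

open SimpleGraph

namespace RP
open Classical

section final2
variable {V : Type*} {P : Finset (Finset (Sym2 V))} {E : Finset (Sym2 V)}

/-- base weight -/
def c0 (P : Finset (Finset (Sym2 V))) (E R : Finset (Sym2 V)) (d : ℤ) [DecidableEq (Sym2 V)] :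
    {e // e ∈ E} ⊕ {p // p ∈ P} ⊕ Unit → ℤ
  | Sum.inl e => if e.1 ∈ R then -1 else 1
  | Sum.inr (Sum.inl _) => 0
  | Sum.inr (Sum.inr _) => d

/-- selection of an even set meeting each pair star exactly twice -/
lemma select {ι U π : Type*} [Fintype ι] [Fintype U] [Fintype π] (a b : ι → U)
    (h2 : ∀ W : U → Prop, (Finset.univ.filter (cr a b W)).card ≠ 1)
    (j : π → U) (h3 : ∀ p, (Finset.univ.filter (cr a b (· = j p))).card = 3) (c : ι → ℤ) :
    ∃ K Kc : Finset ι, (∀ i, i ∈ Kc ↔ i ∉ K) ∧ (∑ i ∈ K, c i + ∑ i ∈ Kc, c i = ∑ i, c i) ∧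
      bd a b K = 0 ∧ 2 * ∑ i ∈ Kc, c i ≤ ∑ i ∈ K, c i ∧
      ∀ p, (Kc.filter (cr a b (· = j p))).card = 1 := by
  set N : ℤ := 1 + 2 * ∑ i, |c i| with hN
  obtain ⟨K, hK, hKw⟩ := two_thirds a b
    (fun i => c i + N * ∑ p, if cr a b (· = j p) i then 1 else 0) h2
  have hsum : ∀ J : Finset ι, ∑ i ∈ J, (c i + N * ∑ p, if cr a b (· = j p) i then 1 else 0) =
      ∑ i ∈ J, c i + N * ∑ p, ((J.filter (cr a b (· = j p))).card : ℤ) := by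
    intro J
    rw [Finset.sum_add_distrib, ← Finset.mul_sum, Finset.sum_comm]
    simp
  rw [hsum, hsum] at hKw
  have hadd : ∀ p, (Kᶜ.filter (cr a b (· = j p))).card + (K.filter (cr a b (· = j p))).card = 3 := by
    intro p
    rw [← h3 p, ← Finset.card_union_of_disjoint, ← Finset.filter_union]
    · congr 2
      rw [Finset.union_comm, Finset.union_compl]
    · exact Finset.disjoint_filter_filter disjoint_compl_left
  have hodd : ∀ p, 1 ≤ (Kᶜ.filter (cr a b (· = j p))).card := by
    intro p
    obtain ⟨k, hk⟩ := even_cr hK (· = j p)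
    have := hadd p
    omega
  have hcK : ∑ p, ((K.filter (cr a b (· = j p))).card : ℤ) =
      2 * ∑ p, ((Kᶜ.filter (cr a b (· = j p))).card : ℤ)
        - 3 * ∑ p, (((Kᶜ.filter (cr a b (· = j p))).card : ℤ) - 1) := by
    rw [Finset.mul_sum, Finset.mul_sum, ← Finset.sum_sub_distrib]
    refine Finset.sum_congr rfl fun p _ => ?_
    have := hadd p
    omega
  set T := ∑ p, (((Kᶜ.filter (cr a b (· = j p))).card : ℤ) - 1) with hT
  have hT0 : 0 ≤ T := Finset.sum_nonneg fun p _ => by have := hodd p; omega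
  rw [hcK] at hKw
  have hb1 : ∑ i ∈ K, c i ≤ ∑ i ∈ K, |c i| := Finset.sum_le_sum fun i _ => le_abs_self _
  have hb2 : - ∑ i ∈ Kᶜ, c i ≤ ∑ i ∈ Kᶜ, |c i| := by
    rw [← Finset.sum_neg_distrib]
    exact Finset.sum_le_sum fun i _ => neg_le_abs _
  have hb3 := Finset.sum_add_sum_compl K (fun i => |c i|)
  have hb4 : 0 ≤ ∑ i ∈ K, |c i| := Finset.sum_nonneg fun i _ => abs_nonneg _
  have hb5 : 0 ≤ ∑ i, |c i| := Finset.sum_nonneg fun i _ => abs_nonneg _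
  have hTz : T = 0 := by
    by_contra hne
    have : 1 ≤ T := by omega
    nlinarith
  refine ⟨K, Kᶜ, fun i => Finset.mem_compl, Finset.sum_add_sum_compl K c, hK, ?_, ?_⟩
  · rw [hTz] at hKw
    linarith
  · intro p
    have := (Finset.sum_eq_zero_iff_of_nonneg (fun p _ => by have := hodd p; omega)).1 hTz p
      (Finset.mem_univ p)
    omega

theorem main [Fintype V] {G : SimpleGraph V} (hE : ∀ e, e ∈ E ↔ e ∈ G.edgeSet)
    (hcard : 3 ≤ Fintype.card V) (hconn : G.Connected)
    (h2vc : ∀ v : V, (G.induce {u : V | u ≠ v}).Connected)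
    (R : Finset (Sym2 V)) (hR : R ⊆ E)
    (hdisj : ∀ p ∈ P, ∀ q ∈ P, p ≠ q → Disjoint p q)
    (hPR : ∀ p ∈ P, p ⊆ R) (hPpair : ∀ p ∈ P, p.card = 2)
    (hthird : ∀ p ∈ P, ∃ v, (∀ e ∈ p, v ∈ e) ∧ ∃ z, G.Adj v z ∧ s(v, z) ∉ p)
    (hdel : ∀ D : Finset (Sym2 V), D ⊆ R →
      (∀ p ∈ P, ∀ e ∈ D, ∀ e' ∈ D, e ∈ p → e' ∈ p → e = e') →
      (G.deleteEdges (D : Set (Sym2 V))).Connected) (s t : V) :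
    ∃ w : G.Walk s t, (∀ u : V, u ∈ w.support) ∧
      3 * (w.length : ℤ) ≤ 4 * E.card - 2 * R.card + G.dist s t := by
  choose vp0 hvp0 hth0 using hthird
  let vp : {p // p ∈ P} → V := fun p => vp0 p.1 p.2
  have hvp : ∀ p, ∀ e ∈ p.1, vp p ∈ e := fun p => hvp0 p.1 p.2
  have hth : ∀ p, ∃ z, G.Adj (vp p) z ∧ s(vp p, z) ∉ p.1 := fun p => hth0 p.1 p.2
  have hPE : ∀ p ∈ P, p ⊆ E := fun p hp => (hPR p hp).trans hR
  have hex : ∀ e : {e // e ∈ E}, ∃ x y, e.1 = s(x, y) := fun e => by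
    induction e.1 using Sym2.ind with
    | _ x y => exact ⟨x, y, rfl⟩
  choose a0 b0 hab using hex
  have hadj : ∀ e, G.Adj (a0 e) (b0 e) := fun e => by
    have := (hE e.1).1 e.2
    rw [hab e] at this
    exact this
  have hne : ∀ e, a0 e ≠ b0 e := fun e => (hadj e).ne
  obtain ⟨K, Kc, hKc, hsplit, hK, hKw, hK1⟩ := select (endA vp a0 s) (endB vp b0 t)
    (bridgeless hE hcard hconn h2vc hdisj hPE hPpair vp hvp hth a0 b0 hab s t)
    (fun p : {p // p ∈ P} => Sum.inr p)
    (card_star hPE hPpair hdisj hvp hab hne s t) (c0 P E R (G.dist s t))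
  obtain ⟨w0, hw0⟩ := hconn.exists_walk_length_eq_dist s t
  -- the multigraph
  let a2 : {e // e ∈ E} ⊕ {e // e ∈ E} ⊕ Unit → V :=
    Sum.elim a0 (Sum.elim a0 fun _ => s)
  let b2 : {e // e ∈ E} ⊕ {e // e ∈ E} ⊕ Unit → V :=
    Sum.elim b0 (Sum.elim b0 fun _ => t)
  let pw : ∀ i, G.Walk (a2 i) (b2 i) := fun i => match i with
    | Sum.inl e => (hadj e).toWalk
    | Sum.inr (Sum.inl e) => (hadj e).toWalk
    | Sum.inr (Sum.inr _) => w0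
  let F : Finset ({e // e ∈ E} ⊕ {e // e ∈ E} ⊕ Unit) := Finset.univ.filter fun i => match i with
    | Sum.inl e => Sum.inl e ∈ K ∨ e.1 ∉ R
    | Sum.inr (Sum.inl e) => Sum.inl e ∉ K ∧ e.1 ∉ R
    | Sum.inr (Sum.inr _) => Sum.inr (Sum.inr ()) ∉ K
  have hFb : bd a2 b2 F = sg s + sg t := by
    have h1 := push_even hK (prj vp)
    have e1 : bd (fun i => prj vp (endA vp a0 s i)) (fun i => prj vp (endB vp b0 t i)) K =
        ∑ e : {e // e ∈ E}, (if Sum.inl e ∈ K then sg (a0 e) + sg (b0 e) else 0) +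
          if Sum.inr (Sum.inr ()) ∈ K then sg s + sg t else 0 := by
      unfold bd
      rw [← Finset.univ_inter K, ← Finset.filter_mem_eq_inter, Finset.sum_filter,
        Fintype.sum_sum_type, Fintype.sum_sum_type]
      have hpz : ∀ p : {p // p ∈ P}, sg (vp p) + sg (vp p) = 0 := fun p => by
        linear_combination (sg (vp p)) * two0 (V := V)
      have hp1 : ∀ x, prj vp (Sum.inl x) = x := fun _ => rfl
      have hp2 : ∀ p, prj vp (Sum.inr p) = vp p := fun _ => rfl
      simp only [endA, endB, prj_port, hp1, hp2, hpz, ite_self, Finset.sum_const_zero, zero_add,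
        Finset.univ_unique, Finset.sum_singleton]
      simp
    have e2 : bd a2 b2 F =
        ∑ e : {e // e ∈ E}, (if Sum.inl e ∈ K then sg (a0 e) + sg (b0 e) else 0) +
          if Sum.inr (Sum.inr ()) ∈ K then 0 else sg s + sg t := by
      unfold bd
      simp only [F]
      rw [Finset.sum_filter, Fintype.sum_sum_type, Fintype.sum_sum_type, ← add_assoc,
        ← Finset.sum_add_distrib]
      congr 1
      · refine Finset.sum_congr rfl fun e _ => ?_
        simp only [a2, b2, Sum.elim_inl, Sum.elim_inr]
        by_cases hk : Sum.inl e ∈ K <;> by_cases hr : e.1 ∈ R <;> simp [hk, hr]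
        linear_combination (sg (a0 e) + sg (b0 e)) * two0 (V := V)
      · simp [a2, b2]
    rw [e1] at h1
    rw [e2]
    split_ifs at h1 ⊢
    · linear_combination h1 - (sg s + sg t) * two0 (V := V)
    · linear_combination h1
  have hFc : ∀ W : V → Prop, W s → (∃ y, ¬ W y) → ∃ i ∈ F, cr a2 b2 W i := by
    intro W hs ⟨y, hy⟩
    by_contra hcon
    push Not at hcon
    let D : Finset (Sym2 V) := R.filter fun e => ∃ h : e ∈ E, Sum.inl ⟨e, h⟩ ∉ K
    have hDc := hdel D (Finset.filter_subset _ _) (by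
      intro p hp e he e' he' hep hep'
      obtain ⟨_, h1, h2⟩ := Finset.mem_filter.1 he
      obtain ⟨_, h1', h2'⟩ := Finset.mem_filter.1 he'
      have hc := (Finset.card_le_one.1 (hK1 ⟨p, hp⟩).le) (Sum.inl ⟨e, h1⟩) (by
          rw [Finset.mem_filter, hKc, cr_pair hdisj hvp hab hne]
          exact ⟨h2, hep⟩) (Sum.inl ⟨e', h1'⟩) (by
          rw [Finset.mem_filter, hKc, cr_pair hdisj hvp hab hne]
          exact ⟨h2', hep'⟩)
      simpa using hc)
    refine hy ((conn_const hDc W ?_ s y).1 hs)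
    intro x z hxz
    rw [SimpleGraph.deleteEdges_adj] at hxz
    have hmem : s(x, z) ∈ E := (hE _).2 hxz.1
    have hF : Sum.inl ⟨s(x, z), hmem⟩ ∈ F := by
      simp only [F, Finset.mem_filter, Finset.mem_univ, true_and]
      by_contra h
      push Not at h
      exact hxz.2 (by
        simp only [D, Finset.coe_filter, Set.mem_ofPred_eq]
        exact ⟨h.2, hmem, h.1⟩)
    have := hcon _ hF
    unfold cr at this
    rw [not_not] at this
    simp only [a2, b2, Sum.elim_inl] at this
    have h2 := hab ⟨s(x, z), hmem⟩
    simp only at h2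
    rcases Sym2.eq_iff.1 h2 with ⟨e1, e2⟩ | ⟨e1, e2⟩
    · rwa [← e1, ← e2] at this
    · rw [← e1, ← e2] at this
      exact this.symm
  obtain ⟨w, hw, hwl⟩ := euler pw hFb hFc
  refine ⟨w, hw, ?_⟩
  have hlen : ((∑ i ∈ F, (pw i).length : ℕ) : ℤ) =
      E.card + ∑ i ∈ Kc, c0 P E R (G.dist s t) i := by
    have hEc : (E.card : ℤ) = ∑ e : {e // e ∈ E}, 1 := by simp
    rw [← Finset.univ_inter Kc, ← Finset.filter_mem_eq_inter, Finset.sum_filter,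
      Fintype.sum_sum_type, Fintype.sum_sum_type, hEc]
    simp only [F]
    push_cast
    rw [Finset.sum_filter, Fintype.sum_sum_type, Fintype.sum_sum_type, ← add_assoc, ← add_assoc,
        ← Finset.sum_add_distrib, ← Finset.sum_add_distrib]
    have hzero : ∑ x : {p // p ∈ P}, (if Sum.inr (Sum.inl x) ∈ Kc then
        c0 P E R (G.dist s t) (Sum.inr (Sum.inl x)) else 0) = 0 :=
      Finset.sum_eq_zero fun p _ => by simp [c0]
    rw [hzero, zero_add]
    have hl1 : ∀ e, (pw (Sum.inl e)).length = 1 := fun e => rfl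
    have hl2 : ∀ e, (pw (Sum.inr (Sum.inl e))).length = 1 := fun e => rfl
    have hl3 : ∀ u, (pw (Sum.inr (Sum.inr u))).length = G.dist s t := fun _ => hw0
    congr 1
    · refine Finset.sum_congr rfl fun e _ => ?_
      by_cases hk : Sum.inl e ∈ K <;> by_cases hr : e.1 ∈ R <;> simp [hk, hr, hl1, hl2, hKc, c0]
    · simp [c0, hl3, hKc]
  have htot : ∑ i, c0 P E R (G.dist s t) i = E.card - 2 * R.card + G.dist s t := by
    rw [Fintype.sum_sum_type, Fintype.sum_sum_type]
    simp only [c0, Finset.sum_const_zero, zero_add, Finset.univ_unique, Finset.sum_singleton]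
    congr 1
    rw [Finset.sum_coe_sort E (fun e => if e ∈ R then (-1 : ℤ) else 1)]
    have e1 : ∀ j, (if j ∈ R then (-1 : ℤ) else 1) = 1 - 2 * if j ∈ R then 1 else 0 := by
      intro j; split_ifs <;> ring
    simp only [e1, Finset.sum_sub_distrib, ← Finset.mul_sum, Finset.sum_boole]
    rw [Finset.filter_mem_eq_inter, Finset.inter_eq_right.2 hR]
    simp
  have hwl' : (w.length : ℤ) ≤ ((∑ i ∈ F, (pw i).length : ℕ) : ℤ) := by exact_mod_cast hwl
  rw [hlen] at hwl'
  linarith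

end final2
end RP

/-- A 2-vertex-connected simple graph on at least 3 vertices with a
removable pairing `(R, P)` has, for any vertices `s, t`, a spanning walk from `s`
to `t` of length at most `(4/3)·|E| − (2/3)·|R| + dist_G(s,t)/3`. -/
theorem spanning_path_walk_of_removable_pairing
    {V : Type*} [Fintype V] [DecidableEq V]
    (G : SimpleGraph V) [DecidableRel G.Adj]
    (hcard : 3 ≤ Fintype.card V)
    (hconn : G.Connected)
    (h2vc : ∀ v : V, (G.induce {u : V | u ≠ v}).Connected)
    (R : Finset (Sym2 V)) (P : Finset (Finset (Sym2 V)))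
    (hR : R ⊆ G.edgeFinset)
    (hPpair : ∀ p ∈ P, p.card = 2)
    (hPsub : ∀ p ∈ P, p ⊆ R)
    (hPdisj : ∀ p ∈ P, ∀ q ∈ P, p ≠ q → Disjoint p q)
    (hPdeg : ∀ p ∈ P, ∃ v : V, (∀ e ∈ p, v ∈ e) ∧ 3 ≤ G.degree v)
    (hPdel : ∀ D : Finset (Sym2 V), D ⊆ R → (∀ p ∈ P, (D ∩ p).card ≤ 1) →
      (G.deleteEdges (D : Set (Sym2 V))).Connected)
    (s t : V) :
    ∃ w : G.Walk s t, (∀ u : V, u ∈ w.support) ∧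
      (w.length : ℝ) ≤ 4 / 3 * G.edgeFinset.card - 2 / 3 * R.card
        + (G.dist s t : ℝ) / 3 := by
  obtain ⟨w, hw, hl⟩ := RP.main (G := G) (E := G.edgeFinset) (P := P) (by simp) hcard hconn h2vc
    R hR hPdisj hPsub hPpair (by
      intro p hp
      obtain ⟨v, hv, hd⟩ := hPdeg p hp
      refine ⟨v, hv, ?_⟩
      by_contra hcon
      push Not at hcon
      have : (G.neighborFinset v).card ≤ p.card := by
        refine Finset.card_le_card_of_injOn (fun z => s(v, z)) ?_ ?_
        · intro z hz
          exact hcon z (by simpa using hz)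
        · intro z _ z' _ h
          exact Sym2.congr_right.1 h
      rw [hPpair p hp, G.card_neighborFinset_eq_degree] at this
      omega) (by
      intro D hD h
      refine hPdel D hD fun p hp => ?_
      rw [Finset.card_le_one]
      intro e he e' he'
      rw [Finset.mem_inter] at he he'
      exact h p hp e he.1 e' he'.1 he.2 he'.2) s t
  refine ⟨w, hw, ?_⟩
  have : 3 * (w.length : ℝ) ≤ 4 * G.edgeFinset.card - 2 * R.card + G.dist s t := by
    exact_mod_cast hl
  linarith
end

section
/- Let G be a connected simple graph on n ≥ 2 vertices with maximum degree at most 3 such that for every vertex v the subgraph induced on the remaining vertices is connected, and let s,t be vertices of G. Then G has a walk from s to t that visits every vertex of G and has length at most 4n/3 − 2/3 + dist_G(s,t)/3, where dist_G(s,t) is the graph distance between s and t in G. -/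
open SimpleGraph


namespace SPW

section TJ

variable {V E : Type*} [Fintype E]

/-- Incidence of an edge with a vertex, mod 2. -/
def inc [DecidableEq V] (p q : E → V) (e : E) (v : V) : ZMod 2 :=
  (if p e = v then 1 else 0) + (if q e = v then 1 else 0)

/-- Boundary of an edge set mod 2. -/
def bd [DecidableEq V] (p q : E → V) (J : E → ZMod 2) (v : V) : ZMod 2 :=
  ∑ e, J e * inc p q e v

/-- Weight of an edge set. -/
def wt (w : E → ℕ) (J : E → ZMod 2) : ℕ := ∑ e, w e * (J e).val

lemma bd_add [DecidableEq V] (p q : E → V) (J K : E → ZMod 2) :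
    bd p q (J + K) = bd p q J + bd p q K := by
  funext v
  simp [bd, add_mul, Finset.sum_add_distrib]

lemma bd_single [DecidableEq V] [DecidableEq E] (p q : E → V) (e : E) :
    bd p q (Pi.single e 1) = Pi.single (p e) 1 + Pi.single (q e) 1 := by
  funext v
  simp only [bd, Pi.single_apply, inc, ite_mul, one_mul, zero_mul, Finset.sum_ite_eq',
    Finset.mem_univ, if_true, Pi.add_apply]
  simp only [eq_comm]

lemma z2_add_self {α : Type*} (f : α → ZMod 2) : f + f = 0 := by
  funext a
  exact (by decide : ∀ x : ZMod 2, x + x = 0) (f a)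

lemma z2_ne (x : ZMod 2) (h : x ≠ 0) : x = 1 := by
  revert x; decide

lemma extract [DecidableEq V] [DecidableEq E] (p q : E → V) :
    ∀ (n : ℕ) (Y : E → ZMod 2) (u : V), (Finset.univ.filter (fun e => Y e ≠ 0)).card = n →
      bd p q Y u = 1 → ∃ v, v ≠ u ∧ bd p q Y v = 1 ∧ ∃ P : E → ZMod 2,
        (∀ e, P e ≠ 0 → Y e ≠ 0) ∧ bd p q P = Pi.single u 1 + Pi.single v 1 := by
  intro n
  induction n with
  | zero =>
    intro Y u hY hu
    have : ∀ e, Y e = 0 := by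
      intro e
      by_contra h
      have : e ∈ (Finset.univ.filter (fun e => Y e ≠ 0)) := by simp [h]
      rw [Finset.card_eq_zero.mp hY] at this
      simp at this
    simp [bd, this] at hu
  | succ n ih =>
    intro Y u hY hu
    obtain ⟨e, he⟩ : ∃ e, Y e * inc p q e u ≠ 0 := by
      by_contra h
      push Not at h
      simp [bd, h] at hu
    have heY : Y e ≠ 0 := left_ne_zero_of_mul he
    have hei : inc p q e u ≠ 0 := right_ne_zero_of_mul he
    obtain ⟨u', huu, hs⟩ : ∃ u', u' ≠ u ∧ bd p q (Pi.single e 1) =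
        Pi.single u 1 + Pi.single u' 1 := by
      rw [bd_single]
      by_cases h1 : p e = u
      · refine ⟨q e, ?_, by rw [h1]⟩
        intro h2
        apply hei
        simp only [inc, h1, h2, if_true]; decide
      · by_cases h2 : q e = u
        · exact ⟨p e, h1, by rw [h2, add_comm]⟩
        · simp [inc, h1, h2] at hei
    by_cases h' : bd p q Y u' = 1
    · refine ⟨u', huu, h', Pi.single e 1, ?_, hs⟩
      intro f hf
      by_cases hfe : f = e
      · rw [hfe]; exact heY
      · simp [hfe] at hf
    · have hY' : bd p q (Y + Pi.single e 1) = bd p q Y + (Pi.single u 1 + Pi.single u' 1) := by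
        rw [bd_add, hs]
      have hsub : ∀ f, (Y + Pi.single e 1 : E → ZMod 2) f ≠ 0 ↔ (Y f ≠ 0 ∧ f ≠ e) := by
        intro f
        by_cases hfe : f = e
        · subst hfe
          have h11 : (1 : ZMod 2) + 1 = 0 := by decide
          simp [Pi.add_apply, Pi.single_eq_same, z2_ne _ heY, h11]
        · simp [hfe]
      have hcard : (Finset.univ.filter (fun f => (Y + Pi.single e 1 : E → ZMod 2) f ≠ 0)).card = n := by
        have : (Finset.univ.filter (fun f => (Y + Pi.single e 1 : E → ZMod 2) f ≠ 0)) =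
            (Finset.univ.filter (fun f => Y f ≠ 0)).erase e := by
          ext f
          simp only [Finset.mem_filter, Finset.mem_univ, true_and, Finset.mem_erase, hsub f]
          tauto
        rw [this, Finset.card_erase_of_mem (by simp [heY]), hY]; rfl
      have hu'0 : bd p q Y u' = 0 := by
        by_contra h; exact h' (z2_ne _ h)
      obtain ⟨v, hvu', hv, P, hP, hPb⟩ := ih (Y + Pi.single e 1) u' hcard (by
        rw [hY']; simp [hu'0, huu])
      rw [hY'] at hv
      have hvu : v ≠ u := by
        rintro rfl
        simp [hu, hvu'] at hv
      refine ⟨v, hvu, by simpa [hvu, hvu'] using hv, P + Pi.single e 1, ?_, ?_⟩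
      · intro f hf
        by_cases hfe : f = e
        · rw [hfe]; exact heY
        · exact ((hsub f).1 (hP f (by simpa [hfe] using hf))).1
      · rw [bd_add, hs, hPb]
        have := z2_add_self (Pi.single u' (1 : ZMod 2))
        calc _ = Pi.single u 1 + Pi.single v 1 + (Pi.single u' (1 : ZMod 2) + Pi.single u' 1) := by abel
          _ = _ := by rw [this, add_zero]

/-- indicator of the cut of `S`. -/
def cutN [DecidableEq V] (p q : E → V) (S : Finset V) (e : E) : ℕ :=
  if (p e ∈ S ↔ q e ∈ S) then 0 else 1

lemma sum_bd [DecidableEq V] (p q : E → V) (S : Finset V) (J : E → ZMod 2) :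
    ∑ v ∈ S, bd p q J v = ∑ e, J e * (cutN p q S e : ZMod 2) := by
  simp only [bd]
  rw [Finset.sum_comm]
  refine Finset.sum_congr rfl fun e _ => ?_
  rw [← Finset.mul_sum]
  congr 1
  simp only [inc, Finset.sum_add_distrib, Finset.sum_ite_eq, cutN]
  by_cases h1 : p e ∈ S <;> by_cases h2 : q e ∈ S <;> simp [h1, h2]
  decide

lemma wt_add_le (w : E → ℕ) (J K : E → ZMod 2) : wt w (J + K) ≤ wt w J + wt w K := by
  simp only [wt, ← Finset.sum_add_distrib, ← mul_add]
  refine Finset.sum_le_sum fun e _ => Nat.mul_le_mul_left _ ?_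
  exact (by decide : ∀ x y : ZMod 2, (x + y).val ≤ x.val + y.val) (J e) (K e)

lemma wt_add_zero (w : E → ℕ) (J Z : E → ZMod 2) (hZ : ∀ e, w e ≠ 0 → Z e = 0) :
    wt w (J + Z) = wt w J := by
  refine Finset.sum_congr rfl fun e _ => ?_
  by_cases h : w e = 0
  · simp [h]
  · simp [hZ e h]

lemma wt_single_add [DecidableEq E] (w : E → ℕ) (J : E → ZMod 2) (e : E) (he : J e ≠ 0) :
    wt w (J + Pi.single e 1) + w e = wt w J := by
  simp only [wt]
  rw [← Finset.add_sum_erase _ _ (Finset.mem_univ e),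
    ← Finset.add_sum_erase Finset.univ (fun e => w e * (J e).val) (Finset.mem_univ e)]
  have h1 : ∑ x ∈ Finset.univ.erase e, w x * ((J + Pi.single e 1 : E → ZMod 2) x).val
      = ∑ x ∈ Finset.univ.erase e, w x * (J x).val := by
    refine Finset.sum_congr rfl fun x hx => ?_
    simp [Finset.ne_of_mem_erase hx]
  rw [h1]
  simp only [Pi.add_apply, Pi.single_eq_same, z2_ne _ he]
  have : ((1 : ZMod 2) + 1).val = 0 := by decide
  rw [this]
  have : (1 : ZMod 2).val = 1 := by decide
  rw [this]
  ring

lemma wt_swap (w : E → ℕ) (Q K C : E → ZMod 2) (hC : ∀ e, C e ≠ 0 → Q e + K e ≠ 0) :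
    wt w (Q + C) + wt w (K + C) = wt w Q + wt w K := by
  simp only [wt, ← Finset.sum_add_distrib, ← mul_add]
  refine Finset.sum_congr rfl fun e _ => ?_
  congr 1
  exact (by decide : ∀ x y c : ZMod 2, (c ≠ 0 → x + y ≠ 0) →
    (x + c).val + (y + c).val = x.val + y.val) (Q e) (K e) (C e) (hC e)

lemma wt_parity [Fintype V] [DecidableEq V] (p q : E → V) (w : E → ℕ) (c : V → ZMod 2)
    (hc : ∀ e, (w e : ZMod 2) = c (p e) + c (q e)) (J : E → ZMod 2) :
    ((wt w J : ℕ) : ZMod 2) = ∑ v, c v * bd p q J v := by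
  simp only [bd, Finset.mul_sum]
  rw [Finset.sum_comm]
  simp only [wt, Nat.cast_sum, Nat.cast_mul]
  refine Finset.sum_congr rfl fun e _ => ?_
  have : ∀ v, c v * (J e * inc p q e v) = J e * ((if p e = v then c v else 0) + (if q e = v then c v else 0)) := by
    intro v
    simp only [inc]
    split_ifs <;> ring
  simp only [this, ← Finset.mul_sum, Finset.sum_add_distrib, Finset.sum_ite_eq, Finset.mem_univ,
    if_true]
  rw [hc, ZMod.natCast_zmod_val, mul_comm]

end TJ
end SPW


namespace SPW

section TJ2

variable {V E : Type*} [Fintype E] [Fintype V] [DecidableEq V] [DecidableEq E]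

lemma z2_cast_val (n : ℕ) (h : (n : ZMod 2) = 1) : n % 2 = 1 := by
  have := (ZMod.natCast_eq_natCast_iff n 1 2).1 (by simpa using h)
  exact this

/-- existence of two-cut-edge pieces -/
lemma two_cut (p q : E → V) (S : Finset V) (a : V) (Y : E → ZMod 2)
    (hout : ∀ v, v ∉ S → v ≠ a → bd p q Y v = 0)
    (hk : 2 ≤ wt (cutN p q S) Y) :
    ∃ C : E → ZMod 2, (∀ e, C e ≠ 0 → Y e ≠ 0) ∧ (∀ v, v ∉ S → bd p q C v = 0) ∧
      wt (cutN p q S) C = 2 := by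
  set pp : E → V ⊕ E := fun e => if p e ∈ S then Sum.inr e else Sum.inl (p e) with hp'
  set qq : E → V ⊕ E := fun e => if q e ∈ S then Sum.inr e else Sum.inl (q e) with hq'
  -- boundary at inl
  have hl : ∀ (X : E → ZMod 2) v, v ∉ S → bd pp qq X (Sum.inl v) = bd p q X v := by
    intro X v hv
    refine Finset.sum_congr rfl fun e _ => ?_
    congr 1
    have h1 : (pp e = Sum.inl v) ↔ p e = v := by
      simp only [hp']
      split_ifs with h
      · simp; rintro rfl; exact hv h
      · simp
    have h2 : (qq e = Sum.inl v) ↔ q e = v := by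
      simp only [hq']
      split_ifs with h
      · simp; rintro rfl; exact hv h
      · simp
    simp only [inc, h1, h2]
  have hlS : ∀ (X : E → ZMod 2) v, v ∈ S → bd pp qq X (Sum.inl v) = 0 := by
    intro X v hv
    refine Finset.sum_eq_zero fun e _ => ?_
    have h1 : ¬ (pp e = Sum.inl v) := by
      simp only [hp']
      split_ifs with h
      · simp
      · simp; rintro rfl; exact h hv
    have h2 : ¬ (qq e = Sum.inl v) := by
      simp only [hq']
      split_ifs with h
      · simp
      · simp; rintro rfl; exact h hv
    simp [inc, h1, h2]
  have hr : ∀ (X : E → ZMod 2) e, bd pp qq X (Sum.inr e) = X e * (cutN p q S e : ZMod 2) := by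
    intro X e
    unfold bd
    rw [Finset.sum_eq_single e]
    · congr 1
      simp only [inc, hp', hq', cutN]
      by_cases h1 : p e ∈ S <;> by_cases h2 : q e ∈ S <;> simp [h1, h2]
      decide
    · intro f _ hf
      have h1 : ¬ (pp f = Sum.inr e) := by
        simp only [hp']; split_ifs <;> simp [hf]
      have h2 : ¬ (qq f = Sum.inr e) := by
        simp only [hq']; split_ifs <;> simp [hf]
      simp [inc, h1, h2]
    · simp
  have hcut01 : ∀ e, cutN p q S e = 0 ∨ cutN p q S e = 1 := by
    intro e; unfold cutN; split_ifs <;> simp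
  -- cut edges of Y
  set F := Finset.univ.filter (fun e => bd pp qq Y (Sum.inr e) = 1) with hF
  have hwtF : ∀ X : E → ZMod 2, wt (cutN p q S) X =
      (Finset.univ.filter (fun e => bd pp qq X (Sum.inr e) = 1)).card := by
    intro X
    rw [Finset.card_filter]
    refine Finset.sum_congr rfl fun e _ => ?_
    rw [hr]
    rcases hcut01 e with h | h
    · simp [h]
    · simp only [h]
      exact (by decide : ∀ x : ZMod 2, 1 * x.val = if x * ((1 : ℕ) : ZMod 2) = 1 then 1 else 0) (X e)
  have hFc : 1 < F.card := by rw [hF, ← hwtF]; exact hk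
  -- goal from a path
  have key : ∀ (P : E → ZMod 2) (e f : E), e ≠ f → (∀ g, P g ≠ 0 → Y g ≠ 0) →
      bd pp qq P = Pi.single (Sum.inr e) 1 + Pi.single (Sum.inr f) 1 →
      ∃ C : E → ZMod 2, (∀ e, C e ≠ 0 → Y e ≠ 0) ∧ (∀ v, v ∉ S → bd p q C v = 0) ∧
      wt (cutN p q S) C = 2 := by
    intro P e f hef hP hb
    refine ⟨P, hP, ?_, ?_⟩
    · intro v hv
      rw [← hl P v hv, hb]
      simp
    · rw [hwtF]
      refine Eq.trans (congrArg Finset.card ?_) (Finset.card_pair hef)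
      ext g
      simp only [hb, Finset.mem_filter, Finset.mem_univ, true_and, Finset.mem_insert,
        Finset.mem_singleton, Pi.add_apply, Pi.single_apply, Sum.inr.injEq]
      by_cases h1 : g = e <;> by_cases h2 : g = f <;> simp [h1, h2]
      · exact absurd (h1.symm.trans h2) hef
      · exact hef
      · exact hef.symm
  obtain ⟨e1, he1, e2, he2, h12⟩ := Finset.one_lt_card.1 hFc
  have he1' : bd pp qq Y (Sum.inr e1) = 1 := by simpa [hF] using he1
  have he2' : bd pp qq Y (Sum.inr e2) = 1 := by simpa [hF] using he2
  obtain ⟨v, hv1, hv2, P, hP, hPb⟩ := extract pp qq _ Y (Sum.inr e1) rfl he1'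
  rcases v with x | f
  · have hxa : x = a := by
      by_contra hxa
      by_cases hxS : x ∈ S
      · rw [hlS _ _ hxS] at hv2; simp at hv2
      · rw [hl _ _ hxS, hout x hxS hxa] at hv2; simp at hv2
    subst hxa
    have hb2 : bd pp qq (Y + P) = bd pp qq Y + (Pi.single (Sum.inr e1) 1 + Pi.single (Sum.inl x) 1) := by
      rw [bd_add, hPb]
    obtain ⟨v', hv1', hv2', P', hP', hPb'⟩ := extract pp qq _ (Y + P) (Sum.inr e2) rfl (by
      rw [hb2]; simp [he2', h12.symm])
    have hYP : ∀ g, P' g ≠ 0 → Y g ≠ 0 := by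
      intro g hg
      by_contra hY0
      have h3 := hP' g hg
      have h4 : P g = 0 := by
        by_contra h5; exact hP g h5 hY0
      simp [hY0, h4] at h3
    rcases v' with y | f
    · exfalso
      rw [hb2] at hv2'
      by_cases hya : y = x
      · subst hya
        simp [hv2] at hv2'
      · simp [hya] at hv2'
        by_cases hyS : y ∈ S
        · rw [hlS _ _ hyS] at hv2'; simp at hv2'
        · rw [hl _ _ hyS, hout y hyS hya] at hv2'; simp at hv2'
    · exact key P' e2 f (by rintro rfl; exact hv1' rfl) hYP hPb'
  · exact key P e1 f (by rintro rfl; exact hv1 rfl) hP hPb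

end TJ2
end SPW


namespace SPW

section TJ3

variable {V E : Type*} [Fintype E] [Fintype V] [DecidableEq V] [DecidableEq E]

lemma cut_step (p q : E → V) (w : E → ℕ) (c : V → ZMod 2)
    (hc : ∀ e, (w e : ZMod 2) = c (p e) + c (q e)) (T : V → ZMod 2) (J : E → ZMod 2)
    (hJ : bd p q J = T) (hmin : ∀ K, bd p q K = T → wt w J ≤ wt w K) (hpos : 0 < wt w J) :
    ∃ S : Finset V, ∑ v ∈ S, T v = 1 ∧ (∀ e, cutN p q S e ≤ w e) ∧
      ∀ K, bd p q K = T → wt w J + wt (cutN p q S) K ≤ wt w K + 1 := by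
  classical
  -- minimal (a,b,Q)
  have hne : ∃ m, ∃ a b Q, bd p q Q = T + Pi.single a 1 + Pi.single b 1 ∧ wt w Q = m := by
    obtain ⟨e, -, -⟩ := Finset.exists_ne_zero_of_sum_ne_zero hpos.ne'
    refine ⟨_, p e, p e, J, ?_, rfl⟩
    rw [hJ, add_assoc, z2_add_self, add_zero]
  obtain ⟨a, b, Q, hQ, hQm⟩ := Nat.find_spec hne
  have hQmin : ∀ a' b' Q', bd p q Q' = T + Pi.single a' 1 + Pi.single b' 1 → wt w Q ≤ wt w Q' := by
    intro a' b' Q' h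
    rw [hQm]
    exact Nat.find_min' hne ⟨a', b', Q', h, rfl⟩
  clear hQm
  have hQJ : wt w Q < wt w J := by
    obtain ⟨e, -, he⟩ := Finset.exists_ne_zero_of_sum_ne_zero hpos.ne'
    have h1 : w e ≠ 0 := left_ne_zero_of_mul he
    have h2 : J e ≠ 0 := by
      intro h; simp [h] at he
    have h3 := wt_single_add w J e h2
    have h4 := hQmin (p e) (q e) (J + Pi.single e 1) (by rw [bd_add, bd_single, hJ, add_assoc])
    omega
  set S : Finset V := Finset.univ.filter (fun v => ∃ Z : E → ZMod 2, (∀ e, w e ≠ 0 → Z e = 0) ∧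
    bd p q Z = Pi.single b 1 + Pi.single v 1) with hS
  have hmem : ∀ v, v ∈ S ↔ ∃ Z : E → ZMod 2, (∀ e, w e ≠ 0 → Z e = 0) ∧
    bd p q Z = Pi.single b 1 + Pi.single v 1 := by intro v; simp [hS]
  have hbS : b ∈ S := (hmem b).2 ⟨0, by simp, by
    rw [z2_add_self]; funext v; simp [bd]⟩
  have haS : a ∉ S := by
    intro h
    obtain ⟨Z, hZ, hZb⟩ := (hmem a).1 h
    have h1 := hmin (Q + Z) (by
      rw [bd_add, hQ, hZb]
      calc _ = T + (Pi.single a (1 : ZMod 2) + Pi.single a 1) + (Pi.single b 1 + Pi.single b 1) := by abel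
        _ = T := by rw [z2_add_self, z2_add_self, add_zero, add_zero])
    rw [wt_add_zero w Q Z hZ] at h1
    omega
  have hcutw : ∀ e, cutN p q S e ≤ w e := by
    intro e
    by_cases hw : w e = 0
    · have hZs : ∀ f, w f ≠ 0 → (Pi.single e 1 : E → ZMod 2) f = 0 := by
        intro f hf
        have : f ≠ e := by rintro rfl; exact hf hw
        simp [this]
      have : p e ∈ S ↔ q e ∈ S := by
        constructor
        · intro h
          obtain ⟨Z, hZ, hZb⟩ := (hmem _).1 h
          refine (hmem _).2 ⟨Z + Pi.single e 1, fun f hf => ?_, ?_⟩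
          · rw [Pi.add_apply, hZ f hf, hZs f hf, add_zero]
          · rw [bd_add, hZb, bd_single]
            calc _ = Pi.single b 1 + Pi.single (q e) 1 + (Pi.single (p e) (1 : ZMod 2) + Pi.single (p e) 1) := by abel
              _ = _ := by rw [z2_add_self, add_zero]
        · intro h
          obtain ⟨Z, hZ, hZb⟩ := (hmem _).1 h
          refine (hmem _).2 ⟨Z + Pi.single e 1, fun f hf => ?_, ?_⟩
          · rw [Pi.add_apply, hZ f hf, hZs f hf, add_zero]
          · rw [bd_add, hZb, bd_single]
            calc _ = Pi.single b 1 + Pi.single (p e) 1 + (Pi.single (q e) (1 : ZMod 2) + Pi.single (q e) 1) := by abel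
              _ = _ := by rw [z2_add_self, add_zero]
      simp [cutN, this]
    · unfold cutN; split_ifs <;> omega
  -- any T0-join using a cut edge is heavy
  have hheavy : ∀ Q' e, bd p q Q' = T + Pi.single a 1 + Pi.single b 1 → cutN p q S e = 1 → Q' e ≠ 0 →
      wt w Q + w e ≤ wt w Q' := by
    intro Q' e hQ' he hQe
    have hx : ∃ s u, s ∈ S ∧ bd p q (Pi.single e 1) = Pi.single s 1 + Pi.single u 1 := by
      rw [bd_single]
      by_cases h1 : p e ∈ S
      · exact ⟨p e, q e, h1, rfl⟩
      · by_cases h2 : q e ∈ S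
        · exact ⟨q e, p e, h2, add_comm _ _⟩
        · simp [cutN, h1, h2] at he
    obtain ⟨s, u, hs, hb⟩ := hx
    obtain ⟨Z, hZ, hZb⟩ := (hmem _).1 hs
    have h1 := hQmin a u (Q' + Pi.single e 1 + Z) (by
      rw [bd_add, bd_add, hQ', hb, hZb]
      calc _ = T + Pi.single a 1 + Pi.single u 1 + (Pi.single b (1 : ZMod 2) + Pi.single b 1)
            + (Pi.single s (1 : ZMod 2) + Pi.single s 1) := by abel
        _ = _ := by rw [z2_add_self, z2_add_self, add_zero, add_zero])
    rw [wt_add_zero w _ Z hZ] at h1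
    have h2 := wt_single_add w Q' e hQe
    omega
  have hQcut : ∀ e, cutN p q S e = 1 → Q e = 0 := by
    intro e he
    by_contra h
    have := hheavy Q e hQ he h
    have := hcutw e
    omega
  have hcut01 : ∀ e, cutN p q S e = 0 ∨ cutN p q S e = 1 := by
    intro e; unfold cutN; split_ifs <;> simp
  have hT : ∑ v ∈ S, T v = 1 := by
    have h1 := sum_bd p q S Q
    rw [Finset.sum_eq_zero (s := Finset.univ)] at h1
    · rw [hQ] at h1
      simp only [Pi.add_apply, Finset.sum_add_distrib, Pi.single_apply, Finset.sum_ite_eq', haS, hbS,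
        if_true, if_false, add_zero] at h1
      revert h1
      generalize ∑ v ∈ S, T v = z
      revert z; decide
    · intro e _
      rcases hcut01 e with h | h
      · simp [h]
      · simp [hQcut e h]
  refine ⟨S, hT, hcutw, ?_⟩
  have hcutZ : ∀ (X Z : E → ZMod 2), (∀ e, w e ≠ 0 → Z e = 0) →
      wt (cutN p q S) (X + Z) = wt (cutN p q S) X := by
    intro X Z hZ
    apply wt_add_zero
    intro e he
    apply hZ
    have := hcutw e
    omega
  have hwtcast : ∀ X : E → ZMod 2, ((wt (cutN p q S) X : ℕ) : ZMod 2) = ∑ v ∈ S, bd p q X v := by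
    intro X
    rw [sum_bd]
    simp only [wt, Nat.cast_sum, Nat.cast_mul, ZMod.natCast_zmod_val]
    exact Finset.sum_congr rfl fun e _ => mul_comm _ _
  have main : ∀ k, ∀ K, bd p q K = T → wt (cutN p q S) K = k → wt w J + k ≤ wt w K + 1 := by
    intro k
    induction k using Nat.strong_induction_on with
    | _ k ih =>
      intro K hK hk
      by_cases hk1 : k ≤ 1
      · have := hmin K hK
        omega
      have hcutQK : wt (cutN p q S) (Q + K) = k := by
        rw [← hk]
        refine Finset.sum_congr rfl fun e _ => ?_
        rcases hcut01 e with h | h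
        · simp [h]
        · simp [hQcut e h]
      obtain ⟨C, hC1, hC2, hC3⟩ := two_cut p q S a (Q + K) (by
        intro v hv hva
        have hvb : v ≠ b := by rintro rfl; exact hv hbS
        rw [bd_add, hQ, hK]
        simp only [Pi.add_apply, Pi.single_apply, hva, hvb, if_false, add_zero]
        exact (by decide : ∀ x : ZMod 2, x + x = 0) _) (by omega)
      -- correct C
      have hfix : ∃ Z : E → ZMod 2, (∀ e, w e ≠ 0 → Z e = 0) ∧ bd p q Z = bd p q C := by
        have hch : ∀ v, ∃ Z : E → ZMod 2, (∀ e, w e ≠ 0 → Z e = 0) ∧ (v ∈ S →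
          bd p q Z = Pi.single b 1 + Pi.single v 1) := by
          intro v
          by_cases hv : v ∈ S
          · obtain ⟨Z, h1, h2⟩ := (hmem v).1 hv
            exact ⟨Z, h1, fun _ => h2⟩
          · exact ⟨0, by simp, fun h => absurd h hv⟩
        choose Zf hZ1 hZ2 using hch
        refine ⟨fun e => ∑ v ∈ S, bd p q C v * Zf v e, ?_, ?_⟩
        · intro e he
          exact Finset.sum_eq_zero fun v _ => by rw [hZ1 v e he, mul_zero]
        · funext x
          have h1 : bd p q (fun e => ∑ v ∈ S, bd p q C v * Zf v e) x =
              ∑ v ∈ S, bd p q C v * bd p q (Zf v) x := by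
            simp only [bd, Finset.sum_mul, Finset.mul_sum]
            rw [Finset.sum_comm]
            refine Finset.sum_congr rfl fun v _ => ?_
            simp only [mul_assoc]
          rw [h1, Finset.sum_congr rfl (fun v hv => by rw [hZ2 v hv])]
          simp only [Pi.add_apply, mul_add, Finset.sum_add_distrib, ← Finset.sum_mul]
          rw [← hwtcast C, hC3]
          have : ((2 : ℕ) : ZMod 2) = 0 := by decide
          rw [this, zero_mul, zero_add]
          simp only [Pi.single_apply, mul_ite, mul_one, mul_zero, Finset.sum_ite_eq]
          split_ifs with h
          · rfl
          · exact (hC2 x h).symm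
      obtain ⟨Z, hZ, hZb⟩ := hfix
      have hCZ : bd p q C + bd p q Z = 0 := by rw [hZb, z2_add_self]
      have hK' : bd p q (K + C + Z) = T := by
        rw [bd_add, bd_add, add_assoc, hCZ, add_zero, hK]
      have hQ' : bd p q (Q + C + Z) = T + Pi.single a 1 + Pi.single b 1 := by
        rw [bd_add, bd_add, add_assoc, hCZ, add_zero, hQ]
      have hkk : wt (cutN p q S) (K + C + Z) + 2 = k := by
        refine Eq.trans (congrArg₂ (· + ·) (hcutZ _ _ hZ) hC3.symm) (Eq.trans ?_ hk)
        simp only [wt, ← Finset.sum_add_distrib, ← mul_add]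
        refine Finset.sum_congr rfl fun e _ => ?_
        rcases hcut01 e with h | h
        · simp [h]
        · congr 1
          have h1 := hC1 e
          simp only [Pi.add_apply, hQcut e h, zero_add] at h1 ⊢
          exact (by decide : ∀ x y : ZMod 2, (y ≠ 0 → x ≠ 0) → (x + y).val + y.val = x.val) _ _ h1
      have hsw := wt_swap w Q K C (fun e he => hC1 e he)
      obtain ⟨e, -, he⟩ : ∃ e ∈ Finset.univ, cutN p q S e * (C e).val ≠ 0 :=
        Finset.exists_ne_zero_of_sum_ne_zero (by unfold wt at hC3; omega)
      have hec : cutN p q S e = 1 := by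
        rcases hcut01 e with h | h
        · simp [h] at he
        · exact h
      have hCe : C e ≠ 0 := by intro h; simp [h] at he
      have hZe : Z e = 0 := hZ e (by have := hcutw e; omega)
      have hhv := hheavy (Q + C + Z) e hQ' hec (by
        simp only [Pi.add_apply, hQcut e hec, hZe, zero_add, add_zero]; exact hCe)
      have hpar : wt w (Q + C + Z) % 2 = wt w Q % 2 := by
        have h1 := wt_parity p q w c hc (Q + C + Z)
        have h2 := wt_parity p q w c hc Q
        rw [hQ', ← hQ, ← h2] at h1
        exact (ZMod.natCast_eq_natCast_iff _ _ 2).1 h1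
      have h5 := wt_add_zero w (Q + C) Z hZ
      have h6 := wt_add_zero w (K + C) Z hZ
      have h7 := hcutw e
      have h8 := ih _ (by omega) (K + C + Z) hK' rfl
      omega
  intro K hK
  exact main _ K hK rfl

lemma tj_parity (p q : E → V) (T : V → ZMod 2) (x : E → ℕ)
    (hx : ∀ S : Finset V, ∑ v ∈ S, T v = 1 → 3 ≤ ∑ e, cutN p q S e * x e)
    (hex : ∃ J, bd p q J = T) :
    ∀ (n : ℕ) (w : E → ℕ) (c : V → ZMod 2), (∀ e, (w e : ZMod 2) = c (p e) + c (q e)) →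
      ∑ e, w e = n → ∃ J, bd p q J = T ∧ 3 * wt w J ≤ ∑ e, w e * x e := by
  classical
  intro n
  induction n using Nat.strong_induction_on with
  | _ n ih =>
    intro w c hc hn
    have hne : ∃ m, ∃ J, bd p q J = T ∧ wt w J = m := by
      obtain ⟨J, h⟩ := hex
      exact ⟨_, J, h, rfl⟩
    obtain ⟨J, hJ, hJm⟩ := Nat.find_spec hne
    have hmin : ∀ K, bd p q K = T → wt w J ≤ wt w K := by
      intro K hK
      rw [hJm]
      exact Nat.find_min' hne ⟨K, hK, rfl⟩
    clear hJm
    by_cases hpos : 0 < wt w J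
    swap
    · exact ⟨J, hJ, by omega⟩
    obtain ⟨S, hS1, hS2, hS3⟩ := cut_step p q w c hc T J hJ hmin hpos
    have h3 := hx S hS1
    have hsum : ∑ e, (w e - cutN p q S e) + ∑ e, cutN p q S e = n := by
      rw [← hn, ← Finset.sum_add_distrib]
      exact Finset.sum_congr rfl fun e _ => Nat.sub_add_cancel (hS2 e)
    have hcpos : 0 < ∑ e, cutN p q S e := by
      by_contra h
      have h0 : ∑ e, cutN p q S e = 0 := by omega
      have h1 : ∀ e, cutN p q S e = 0 := by
        intro e
        exact (Finset.sum_eq_zero_iff.1 h0) e (Finset.mem_univ e)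
      simp [h1] at h3
    obtain ⟨K, hK, hKw⟩ := ih (∑ e, (w e - cutN p q S e)) (by omega) (fun e => w e - cutN p q S e)
      (fun v => c v + if v ∈ S then 1 else 0) (by
        intro e
        rw [Nat.cast_sub (hS2 e), hc]
        by_cases h1 : p e ∈ S <;> by_cases h2 : q e ∈ S <;> simp only [cutN, h1, h2, if_true, if_false, iff_self, iff_false, not_true, iff_true] <;>
        · generalize c (p e) = y
          generalize c (q e) = z
          revert y z
          decide) rfl
    have hKs : wt (fun e => w e - cutN p q S e) K + wt (cutN p q S) K = wt w K := by
      simp only [wt, ← Finset.sum_add_distrib, ← add_mul]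
      exact Finset.sum_congr rfl fun e _ => by rw [Nat.sub_add_cancel (hS2 e)]
    have hxs : ∑ e, (w e - cutN p q S e) * x e + ∑ e, cutN p q S e * x e = ∑ e, w e * x e := by
      simp only [← Finset.sum_add_distrib, ← add_mul]
      exact Finset.sum_congr rfl fun e _ => by rw [Nat.sub_add_cancel (hS2 e)]
    have := hS3 K hK
    exact ⟨J, hJ, by omega⟩

/-- Signed version: bridgeless multigraph, `x` with values in `{1,2}`. -/
lemma tj_signed (p q : E → V) (x : E → ℕ) (hx12 : ∀ e, x e = 1 ∨ x e = 2)
    (hbr : ∀ S : Finset V, ∑ e, cutN p q S e ≠ 1) (W : E → ℤ) :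
    ∃ J, bd p q J = bd p q (fun e => (x e : ZMod 2)) ∧
      3 * ∑ e, W e * ((J e).val : ℤ) ≤ ∑ e, W e * (x e : ℤ) := by
  classical
  set x' : E → ℕ := fun e => if W e < 0 then 3 - x e else x e with hx'
  have hx'12 : ∀ e, x' e = 1 ∨ x' e = 2 := by
    intro e; simp only [hx']; rcases hx12 e with h | h <;> split_ifs <;> omega
  set T := bd p q (fun e => (x' e : ZMod 2)) with hT
  have hcond : ∀ S : Finset V, ∑ v ∈ S, T v = 1 → 3 ≤ ∑ e, cutN p q S e * x' e := by
    intro S hS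
    rw [hT, sum_bd] at hS
    have h1 : (∑ e, cutN p q S e * x' e) % 2 = 1 := by
      apply z2_cast_val
      rw [← hS]
      push_cast
      exact Finset.sum_congr rfl fun e _ => mul_comm _ _
    have h2 : ∑ e, cutN p q S e ≤ ∑ e, cutN p q S e * x' e := by
      refine Finset.sum_le_sum fun e _ => ?_
      rcases hx'12 e with h | h <;> rw [h] <;> omega
    have h3 : ∑ e, cutN p q S e ≠ 0 := by
      intro h0
      have h1' : ∀ e, cutN p q S e = 0 := by
        intro e
        exact (Finset.sum_eq_zero_iff.1 h0) e (Finset.mem_univ e)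
      simp [h1'] at h1
    have := hbr S
    omega
  obtain ⟨J, hJ, hJw⟩ := tj_parity p q T x' hcond ⟨_, rfl⟩ _ (fun e => 2 * (W e).natAbs) (fun _ => 0)
    (by intro e; push_cast; rw [(by decide : (2 : ZMod 2) = 0)]; ring) rfl
  refine ⟨J + fun e => if W e < 0 then 1 else 0, ?_, ?_⟩
  · rw [bd_add, hJ, hT, ← bd_add]
    congr 1
    funext e
    simp only [Pi.add_apply, hx']
    rcases hx12 e with h | h <;> split_ifs <;> simp [h] <;> decide
  · have key : ∑ e, W e * (x e : ℤ) - 3 * ∑ e, W e * (((J + fun e => if W e < 0 then 1 else 0 : E → ZMod 2) e).val : ℤ)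
        = ∑ e, ((W e).natAbs * x' e : ℤ) - 3 * ∑ e, ((W e).natAbs : ℤ) * ((J e).val : ℤ) := by
      simp only [Finset.mul_sum, ← Finset.sum_sub_distrib]
      refine Finset.sum_congr rfl fun e _ => ?_
      simp only [Pi.add_apply, hx']
      have hv0 : (1 : ZMod 2).val = 1 := by decide
      have hv1 : ((1 : ZMod 2) + 1).val = 0 := by decide
      by_cases hw : W e < 0
      · simp only [hw, if_true]
        have h1 : ((W e).natAbs : ℤ) = - W e := by omega
        rw [h1]
        rcases (by decide : ∀ z : ZMod 2, z = 0 ∨ z = 1) (J e) with hz | hz <;>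
          rcases hx12 e with h | h <;> simp [hz, h, hv0, hv1] <;> ring
      · simp only [hw, if_false, add_zero]
        have h1 : ((W e).natAbs : ℤ) = W e := by omega
        rw [h1]
    have h2 : (3 * ∑ e, ((W e).natAbs : ℤ) * ((J e).val : ℤ)) ≤ ∑ e, ((W e).natAbs * x' e : ℤ) := by
      have h3 : (3 * wt (fun e => 2 * (W e).natAbs) J : ℕ) ≤ ((∑ e, 2 * (W e).natAbs * x' e : ℕ) : ℤ) := by
        exact_mod_cast hJw
      unfold wt at h3
      simp only [mul_assoc, ← Finset.mul_sum] at h3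
      push_cast at h3 ⊢
      linarith
    linarith

end TJ3
end SPW


namespace SPW

section Euler

variable {V : Type*} [Fintype V] [DecidableEq V] {G : SimpleGraph V}

lemma sum_ind_edge {a c : V} (hac : a ≠ c) (v : V) :
    ∑ u, (if s(a, c) = s(v, u) then (1 : ZMod 2) else 0) =
      (if v = a then 1 else 0) + (if v = c then 1 else 0) := by
  have h : ∀ u, (s(a, c) = s(v, u)) ↔ ((v = a ∧ u = c) ∨ (v = c ∧ u = a)) := by
    intro u
    rw [Sym2.eq_iff]
    constructor <;> rintro (⟨h1, h2⟩ | ⟨h1, h2⟩) <;> simp [h1, h2]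
  simp only [h]
  by_cases h1 : v = a
  · subst h1; simp [hac]
  · by_cases h2 : v = c
    · subst h2; simp [h1]
    · simp [h1, h2]

lemma walk_deg {a b : V} (w : G.Walk a b) (v : V) :
    ∑ u, ((w.edges.count s(v, u) : ℕ) : ZMod 2) =
      (if v = a then 1 else 0) + (if v = b then 1 else 0) := by
  induction w with
  | nil => 
    simp
    split_ifs <;> decide
  | cons h p ih =>
    rename_i x y z
    simp only [Walk.edges_cons, List.count_cons, Nat.cast_add, Finset.sum_add_distrib, ih]
    have := sum_ind_edge h.ne v
    simp only [beq_iff_eq, Nat.cast_ite, Nat.cast_one, Nat.cast_zero]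
    rw [this]
    split_ifs <;> decide

lemma sum_count_edges {a b : V} (w : G.Walk a b) :
    ∑ z : Sym2 V, w.edges.count z = w.length := by
  rw [← Walk.length_edges]
  have h := Multiset.sum_count_eq_card (s := Finset.univ) (m := (w.edges : Multiset (Sym2 V))) (by simp)
  simp only [Multiset.coe_count, Multiset.coe_card] at h
  convert h

lemma walk_len_le {a b : V} (w : G.Walk a b) (m : Sym2 V → ℕ) (h : ∀ z, w.edges.count z ≤ m z) :
    w.length ≤ ∑ z, m z := by
  rw [← sum_count_edges]
  exact Finset.sum_le_sum fun z _ => h z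

lemma walk_max (m : Sym2 V → ℕ) (hm : ∀ u v, m s(u, v) ≠ 0 → G.Adj u v) (s t : V)
    (hpar : ∀ v, ∑ u, (m s(v, u) : ZMod 2) = (if v = s then 1 else 0) + (if v = t then 1 else 0)) :
    ∃ w : G.Walk s t, (∀ z, w.edges.count z ≤ m z) ∧
      ∀ u, m s(s, u) ≠ 0 → w.length ≠ 0 := by
  classical
  let Pr : ℕ → Prop := fun n => ∃ x, ∃ w : G.Walk s x, (∀ z, w.edges.count z ≤ m z) ∧ w.length = n
  have h0 : Pr 0 := ⟨s, Walk.nil, by simp, rfl⟩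
  have hb : ∀ n, Pr n → n ≤ ∑ z, m z := by
    rintro n ⟨x, w, hw, rfl⟩
    exact walk_len_le w m hw
  have hspec : Pr (Nat.findGreatest Pr (∑ z, m z)) := Nat.findGreatest_spec (Nat.zero_le _) h0
  obtain ⟨x, w, hw, hl⟩ := hspec
  have hmax : ∀ y (w' : G.Walk s y), (∀ z, w'.edges.count z ≤ m z) → w'.length ≤ w.length := by
    intro y w' hw'
    rw [hl]
    exact Nat.le_findGreatest (walk_len_le w' m hw') ⟨y, w', hw', rfl⟩
  have hext : ∀ u, m s(x, u) ≤ w.edges.count s(x, u) := by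
    intro u
    by_contra hlt
    push Not at hlt
    have hadj : G.Adj x u := hm x u (by omega)
    have := hmax u (w.concat hadj) (by
      intro z
      rw [Walk.edges_concat, List.concat_eq_append, List.count_append, List.count_singleton]
      have := hw z
      by_cases hz : s(x, u) = z
      · subst hz; simp; omega
      · simp [hz]; omega)
    rw [Walk.length_concat] at this
    omega
  have hxt : x = t := by
    by_contra hxt
    have h1 := hpar x
    have h2 := walk_deg w x
    have h3 : ∀ u, m s(x, u) = w.edges.count s(x, u) := fun u => le_antisymm (hext u) (hw _)
    simp only [h3] at h1
    rw [h1] at h2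
    simp [hxt] at h2
  subst hxt
  refine ⟨w, hw, ?_⟩
  intro u hu hl0
  have hsx : s = x := Walk.eq_of_length_eq_zero hl0
  subst hsx
  have h1 := hext u
  have h2 := walk_len_le w w.edges.count (fun z => le_rfl)
  have h3 : w.edges.count s(s, u) ≤ w.edges.length := List.count_le_length
  rw [Walk.length_edges] at h3
  omega

lemma euler (m : Sym2 V → ℕ) (hm : ∀ u v, m s(u, v) ≠ 0 → G.Adj u v) (s t : V)
    (hpar : ∀ v, ∑ u, (m s(v, u) : ZMod 2) = (if v = s then 1 else 0) + (if v = t then 1 else 0))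
    (hcon : ∀ A : Set V, s ∈ A → (∀ u v, u ∈ A → m s(u, v) ≠ 0 → v ∈ A) → ∀ v, v ∈ A) :
    ∃ w : G.Walk s t, (∀ u, u ∈ w.support) ∧ w.length ≤ ∑ z, m z := by
  classical
  let Pr : ℕ → Prop := fun n => ∃ w : G.Walk s t, (∀ z, w.edges.count z ≤ m z) ∧ w.length = n
  obtain ⟨w0, hw0, -⟩ := walk_max m hm s t hpar
  have hspec : Pr (Nat.findGreatest Pr (∑ z, m z)) :=
    Nat.findGreatest_spec (walk_len_le w0 m hw0) ⟨w0, hw0, rfl⟩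
  obtain ⟨w, hw, hl⟩ := hspec
  have hmax : ∀ (w' : G.Walk s t), (∀ z, w'.edges.count z ≤ m z) → w'.length ≤ w.length := by
    intro w' hw'
    rw [hl]
    exact Nat.le_findGreatest (walk_len_le w' m hw') ⟨w', hw', rfl⟩
  refine ⟨w, ?_, walk_len_le w m hw⟩
  apply hcon {u | u ∈ w.support} (by simp)
  intro u v hu hmuv
  by_contra hv
  change u ∈ w.support at hu
  change ¬ v ∈ w.support at hv
  have hcnt : w.edges.count s(u, v) = 0 := by
    rw [List.count_eq_zero]
    intro h
    exact hv (w.snd_mem_support_of_mem_edges h)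
  obtain ⟨c, hc, hcl⟩ := walk_max (G := G) (fun z => m z - w.edges.count z)
    (fun a b hab => hm a b (by omega)) u u (by
      intro x
      have h1 := hpar x
      have h2 := walk_deg w x
      simp only [Nat.cast_sub (hw _), Finset.sum_sub_distrib, h1, h2, sub_self]
      split_ifs <;> decide)
  have hcl' := hcl v (by omega)
  have hsp := Walk.take_spec w hu
  have := hmax ((w.takeUntil u hu).append (c.append (w.dropUntil u hu))) (by
    intro z
    have h1 : w.edges.count z = (w.takeUntil u hu).edges.count z + (w.dropUntil u hu).edges.count z := by
      conv_lhs => rw [← hsp]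
      rw [Walk.edges_append, List.count_append]
    have h2 := hc z
    have h3 := hw z
    simp only [Walk.edges_append, List.count_append]
    omega)
  have h4 : w.length = (w.takeUntil u hu).length + (w.dropUntil u hu).length := by
    conv_lhs => rw [← hsp]
    rw [Walk.length_append]
  simp only [Walk.length_append] at this
  omega

end Euler
end SPW


namespace SPW

section DFS

variable {V : Type*} [Fintype V] [DecidableEq V]

/-- rooted spanning tree data -/
structure RT (G : SimpleGraph V) (r : V) (par : V → V) (d : V → ℕ) : Prop where
  root : par r = r
  droot : d r = 0
  adj : ∀ v, v ≠ r → G.Adj v (par v)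
  dep : ∀ v, v ≠ r → d v = d (par v) + 1

/-- ancestor relation -/
def Anc (par : V → V) (a v : V) : Prop := ∃ k, par^[k] v = a

variable {G : SimpleGraph V} {r : V} {par : V → V} {d : V → ℕ}

lemma Anc.refl (v : V) : Anc par v v := ⟨0, rfl⟩

lemma Anc.trans {a b c : V} (h1 : Anc par a b) (h2 : Anc par b c) : Anc par a c := by
  obtain ⟨k, rfl⟩ := h1
  obtain ⟨l, rfl⟩ := h2
  exact ⟨k + l, Function.iterate_add_apply _ _ _ _⟩

lemma Anc.par_self (v : V) : Anc par (par v) v := ⟨1, rfl⟩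

lemma Anc.par_of_ne {a v : V} (h : Anc par a v) (hne : v ≠ a) : Anc par a (par v) := by
  obtain ⟨k, hk⟩ := h
  cases k with
  | zero => exact absurd hk hne
  | succ k => exact ⟨k, by rwa [Function.iterate_succ_apply] at hk⟩

lemma Anc.total {a b v : V} (h1 : Anc par a v) (h2 : Anc par b v) : Anc par a b ∨ Anc par b a := by
  obtain ⟨k, rfl⟩ := h1
  obtain ⟨l, rfl⟩ := h2
  rcases le_total k l with h | h
  · right
    exact ⟨l - k, by rw [← Function.iterate_add_apply, Nat.sub_add_cancel h]⟩
  · left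
    exact ⟨k - l, by rw [← Function.iterate_add_apply, Nat.sub_add_cancel h]⟩

lemma RT.iter (h : RT G r par d) (k : ℕ) (v : V) (hk : k ≤ d v) : d (par^[k] v) + k = d v := by
  induction k with
  | zero => rfl
  | succ k ih =>
    have h1 := ih (by omega)
    rw [Function.iterate_succ_apply']
    have hne : par^[k] v ≠ r := by
      intro h2; rw [h2, h.droot] at h1; omega
    have := h.dep _ hne
    omega

lemma RT.d_zero (h : RT G r par d) {v : V} (hv : d v = 0) : v = r := by
  by_contra hne
  have := h.dep v hne
  omega

lemma RT.root_anc (h : RT G r par d) (v : V) : Anc par r v :=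
  ⟨d v, h.d_zero (by have := h.iter (d v) v le_rfl; omega)⟩

lemma RT.lt_card (h : RT G r par d) (v : V) : d v < Fintype.card V := by
  have hinj : Function.Injective (fun i : Fin (d v + 1) => par^[i] v) := by
    intro i j hij
    have h1 := h.iter i v (by omega)
    have h2 := h.iter j v (by omega)
    simp only at hij
    rw [hij] at h1
    exact Fin.ext (by omega)
  have := Fintype.card_le_of_injective _ hinj
  rw [Fintype.card_fin] at this
  omega

lemma RT.anc_le (h : RT G r par d) {a v : V} (ha : Anc par a v) : d a ≤ d v := by
  obtain ⟨k, rfl⟩ := ha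
  induction k with
  | zero => rfl
  | succ k ih =>
    rw [Function.iterate_succ_apply']
    by_cases hr : par^[k] v = r
    · rw [hr, h.root, h.droot]; omega
    · have := h.dep _ hr; omega

lemma RT.anc_lt (h : RT G r par d) {a v : V} (ha : Anc par a v) (hne : v ≠ a) : d a < d v := by
  have h1 := h.anc_le (ha.par_of_ne hne)
  by_cases hr : v = r
  · subst hr
    have h2 := h.anc_le ha
    rw [h.droot] at h2
    exact absurd (h.d_zero (by omega)).symm hne
  · have := h.dep v hr; omega

/-- unique child towards a strict descendant -/
lemma RT.child (h : RT G r par d) {a v : V} (ha : Anc par a v) (hne : v ≠ a) :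
    ∃ c, c ≠ r ∧ par c = a ∧ Anc par c v := by
  obtain ⟨k, hk⟩ := ha
  induction k generalizing v with
  | zero => exact absurd hk hne
  | succ k ih =>
    rw [Function.iterate_succ_apply] at hk
    by_cases h1 : par v = a
    · refine ⟨v, ?_, h1, Anc.refl v⟩
      rintro rfl
      exact hne (by rw [← h1, h.root])
    · obtain ⟨c, h2, h3, h4⟩ := ih h1 hk
      exact ⟨c, h2, h3, h4.trans (Anc.par_self v)⟩

lemma exists_rt (hG : G.Connected) (r : V) : ∃ par d, RT G r par d := by
  have : ∀ v, ∃ u, v ≠ r → G.Adj v u ∧ G.dist r v = G.dist r u + 1 := by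
    intro v
    by_cases hv : v = r
    · exact ⟨v, fun h => absurd hv h⟩
    · obtain ⟨p, hp⟩ := (hG v r).exists_walk_length_eq_dist
      cases p with
      | nil => exact absurd rfl hv
      | cons hadj p =>
        rename_i u
        refine ⟨u, fun _ => ⟨hadj, ?_⟩⟩
        have h1 := dist_le p
        have h2 := hG.dist_triangle (u := r) (v := u) (w := v)
        have h3 : G.dist u v = 1 := dist_eq_one_iff_adj.2 hadj.symm
        have h4 : G.dist v r = G.dist r v := dist_comm
        have h5 : G.dist u r = G.dist r u := dist_comm
        rw [Walk.length_cons] at hp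
        omega
  choose f hf using this
  refine ⟨fun v => if v = r then r else f v, G.dist r, by simp, by simp, ?_, ?_⟩
  · intro v hv; simp only [hv, if_false]; exact (hf v hv).1
  · intro v hv; simp only [hv, if_false]; exact (hf v hv).2

lemma exists_dfs (hG : G.Connected) (r : V) : ∃ par d, RT G r par d ∧
    ∀ u v, G.Adj u v → Anc par u v ∨ Anc par v u := by
  classical
  let Pr : ℕ → Prop := fun n => ∃ par d, RT G r par d ∧ ∑ v, d v = n
  have hb : ∀ par d, RT G r par d → ∑ v, d v ≤ Fintype.card V * Fintype.card V := by
    intro par d h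
    calc ∑ v, d v ≤ ∑ v : V, Fintype.card V := Finset.sum_le_sum fun v _ => (h.lt_card v).le
      _ = _ := by simp
  obtain ⟨par0, d0, h0⟩ := exists_rt hG r
  have hspec : Pr (Nat.findGreatest Pr (Fintype.card V * Fintype.card V)) :=
    Nat.findGreatest_spec (hb _ _ h0) ⟨par0, d0, h0, rfl⟩
  obtain ⟨par, d, h, hsum⟩ := hspec
  have hmax : ∀ par' d', RT G r par' d' → ∑ v, d' v ≤ ∑ v, d v := by
    intro par' d' h'
    rw [hsum]
    exact Nat.le_findGreatest (hb _ _ h') ⟨par', d', h', rfl⟩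
  have key : ∀ u v, G.Adj u v → d v ≤ d u → Anc par u v ∨ Anc par v u := by
    intro u v huv hd
    by_contra hcon
    push Not at hcon
    obtain ⟨hc1, hc2⟩ := hcon
    have hvr : v ≠ r := by rintro rfl; exact hc2 (h.root_anc u)
    have hur : ¬ Anc par v r := by
      intro hh
      have := h.anc_le hh
      rw [h.droot] at this
      exact hvr (h.d_zero (by omega))
    have := hmax (Function.update par v u) (fun x => if Anc par v x then d x + (d u + 1 - d v) else d x) ?_
    · have hlt : ∑ x, d x < ∑ x, (if Anc par v x then d x + (d u + 1 - d v) else d x) := by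
        apply Finset.sum_lt_sum
        · intro x _; split_ifs <;> omega
        · exact ⟨v, Finset.mem_univ _, by rw [if_pos (Anc.refl v)]; omega⟩
      omega
    · refine ⟨?_, ?_, ?_, ?_⟩
      · rw [Function.update_of_ne hvr.symm, h.root]
      · simp only [hur, if_false, h.droot]
      · intro x hx
        by_cases hxv : x = v
        · subst hxv; rw [Function.update_self]; exact huv.symm
        · rw [Function.update_of_ne hxv]; exact h.adj x hx
      · intro x hx
        by_cases hxv : x = v
        · subst hxv
          simp only [Function.update_self, if_pos (Anc.refl x), hc2, if_false]
          omega
        · simp only [Function.update_of_ne hxv]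
          have hdx := h.dep x hx
          by_cases hax : Anc par v x
          · rw [if_pos hax, if_pos (hax.par_of_ne hxv)]; omega
          · have : ¬ Anc par v (par x) := fun hh => hax (hh.trans (Anc.par_self x))
            rw [if_neg hax, if_neg this]; omega
  refine ⟨par, d, h, ?_⟩
  intro u v huv
  rcases le_total (d v) (d u) with hd | hd
  · exact key u v huv hd
  · exact (key v u huv.symm hd).symm

end DFS
end SPW


namespace SPW

section Orient

variable {V : Type*} [Fintype V] [DecidableEq V] {E : Type*} [Fintype E] [DecidableEq E]

/-- All edges of `G`, oriented from the deeper to the shallower end of a DFS tree. -/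
structure OE (G : SimpleGraph V) (r : V) (par : V → V) (d : V → ℕ) (lo up : E → V) : Prop where
  rt : RT G r par d
  comp : ∀ u v, G.Adj u v → Anc par u v ∨ Anc par v u
  adj : ∀ e, G.Adj (lo e) (up e)
  dlt : ∀ e, d (up e) < d (lo e)
  surj : ∀ u v, G.Adj u v → d v < d u → ∃ e, lo e = u ∧ up e = v
  inj : ∀ e f, lo e = lo f → up e = up f → e = f

variable {G : SimpleGraph V} {r : V} {par : V → V} {d : V → ℕ} {lo up : E → V}

lemma OE.anc (h : OE G r par d lo up) (e : E) : Anc par (up e) (lo e) := by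
  rcases h.comp _ _ (h.adj e) with h1 | h1
  · have := h.rt.anc_le h1
    have := h.dlt e
    omega
  · exact h1

lemma OE.lo_ne (h : OE G r par d lo up) (e : E) : lo e ≠ r := by
  intro h1
  have := h.dlt e
  rw [h1, h.rt.droot] at this
  omega

lemma OE.ex (h : OE G r par d lo up) {u v : V} (huv : G.Adj u v) :
    ∃ e, s(lo e, up e) = s(u, v) := by
  rcases lt_trichotomy (d u) (d v) with h1 | h1 | h1
  · obtain ⟨e, h2, h3⟩ := h.surj v u huv.symm h1
    exact ⟨e, by rw [h2, h3, Sym2.eq_swap]⟩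
  · exfalso
    rcases h.comp _ _ huv with h2 | h2
    · have := h.rt.anc_lt h2 huv.ne.symm; omega
    · have := h.rt.anc_lt h2 huv.ne; omega
  · obtain ⟨e, h2, h3⟩ := h.surj u v huv h1
    exact ⟨e, by rw [h2, h3]⟩

lemma OE.sym_inj (h : OE G r par d lo up) {e f : E} (hef : s(lo e, up e) = s(lo f, up f)) :
    e = f := by
  rw [Sym2.eq_iff] at hef
  rcases hef with ⟨h1, h2⟩ | ⟨h1, h2⟩
  · exact h.inj e f h1 h2
  · have h3 := h.dlt e
    have h4 := h.dlt f
    rw [h1, h2] at h3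
    omega

lemma reach_inv {W : Type*} {H : SimpleGraph W} (f : W → Prop)
    (hf : ∀ a b, H.Adj a b → (f a ↔ f b)) {a b : W} (hab : H.Reachable a b) : f a ↔ f b := by
  obtain ⟨w⟩ := hab
  induction w with
  | nil => rfl
  | cons hadj _ ih => exact (hf _ _ hadj).trans ih

lemma OE.bridgeless (h : OE G r par d lo up) (hn : 3 ≤ Fintype.card V)
    (h2vc : ∀ v : V, (G.induce {u : V | u ≠ v}).Connected) (S : Finset V) :
    ∑ e, cutN lo up S e ≠ 1 := by
  intro hsum
  obtain ⟨e, he, huniq⟩ : ∃ e, cutN lo up S e = 1 ∧ ∀ f, cutN lo up S f ≠ 0 → f = e := by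
    obtain ⟨e, -, he⟩ : ∃ e ∈ Finset.univ, cutN lo up S e ≠ 0 :=
      Finset.exists_ne_zero_of_sum_ne_zero (by omega)
    have h1 : ∑ f ∈ Finset.univ.erase e, cutN lo up S f + cutN lo up S e = 1 := by
      rw [Finset.sum_erase_add _ _ (Finset.mem_univ e), hsum]
    refine ⟨e, by omega, ?_⟩
    intro f hf
    by_contra hfe
    have := Finset.single_le_sum (f := cutN lo up S) (fun i _ => Nat.zero_le _)
      (Finset.mem_erase.2 ⟨hfe, Finset.mem_univ f⟩)
    omega
  have hside : ¬ (lo e ∈ S ↔ up e ∈ S) := by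
    intro h1; simp [cutN, h1] at he
  have hcross : ∀ a b, G.Adj a b → ¬ (a ∈ S ↔ b ∈ S) → s(lo e, up e) = s(a, b) := by
    intro a b hab hnot
    obtain ⟨f, hf⟩ := h.ex hab
    have : f = e := by
      apply huniq
      intro h0
      have h1 : lo f ∈ S ↔ up f ∈ S := by
        by_contra h2; simp [cutN, h2] at h0
      rw [Sym2.eq_iff] at hf
      rcases hf with ⟨h2, h3⟩ | ⟨h2, h3⟩
      · rw [h2, h3] at h1; exact hnot h1
      · rw [h2, h3] at h1; exact hnot h1.symm
    rw [← this, hf]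
  obtain ⟨w, hw1, hw2⟩ : ∃ w, w ≠ lo e ∧ w ≠ up e := by
    by_contra hcon
    push Not at hcon
    have : (Finset.univ : Finset V) ⊆ {lo e, up e} := by
      intro w _
      by_cases h1 : w = lo e
      · simp [h1]
      · simp [hcon w h1]
    have h1 := Finset.card_le_card this
    have h2 := Finset.card_le_two (a := lo e) (b := up e)
    rw [Finset.card_univ] at h1
    omega
  have key : ∀ x y, s(lo e, up e) = s(x, y) → w ≠ x → w ≠ y → y ≠ x → ¬ (w ∈ S ↔ y ∈ S) → False := by
    intro x y hxy hwx hwy hyx hno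
    apply hno
    have := reach_inv (H := G.induce {u : V | u ≠ x}) (fun a => (a : V) ∈ S) ?_
      ((h2vc x) ⟨w, hwx⟩ ⟨y, hyx⟩)
    · exact this
    · rintro ⟨a, ha⟩ ⟨b, hb⟩ hab
      by_contra hnn
      have h1 := hcross a b (by simpa using hab) hnn
      rw [hxy, Sym2.eq_iff] at h1
      rcases h1 with ⟨h2, h3⟩ | ⟨h2, h3⟩
      · exact ha h2.symm
      · exact hb h2.symm
  have hne := (h.adj e).ne
  by_cases hc : w ∈ S ↔ up e ∈ S
  · exact key (up e) (lo e) Sym2.eq_swap hw2 hw1 hne (fun h1 => hside (h1.symm.trans hc))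
  · exact key (lo e) (up e) rfl hw1 hw2 hne.symm hc

lemma OE.root_child (h : OE G r par d lo up)
    (h2vc : ∀ v : V, (G.induce {u : V | u ≠ v}).Connected) {c : V} (hc : c ≠ r) (hpc : par c = r)
    (v : V) (hv : v ≠ r) : Anc par c v := by
  have := reach_inv (H := G.induce {u : V | u ≠ r}) (fun a => Anc par c (a : V)) ?_
    ((h2vc r) ⟨c, hc⟩ ⟨v, hv⟩)
  · exact this.1 (Anc.refl c)
  · have key : ∀ a b, G.Adj a b → b ≠ r → Anc par c a → Anc par c b := by
      intro a b hab hb hca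
      rcases h.comp _ _ hab with h1 | h1
      · exact hca.trans h1
      · rcases Anc.total h1 hca with h2 | h2
        · by_cases hbc : c = b
          · rw [hbc]; exact Anc.refl b
          · have h3 := h2.par_of_ne hbc
            rw [hpc] at h3
            have h4 := h.rt.anc_le h3
            rw [h.rt.droot] at h4
            exact absurd (h.rt.d_zero (by omega)) hb
        · exact h2
    rintro ⟨a, ha⟩ ⟨b, hb⟩ hab
    have hab' : G.Adj a b := by simpa using hab
    exact ⟨key a b hab' hb, key b a hab'.symm ha⟩

/-- `v` is the upper end of a back edge -/
def Head (par : V → V) (lo up : E → V) (v : V) : Prop := ∃ e, up e = v ∧ par (lo e) ≠ v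

lemma OE.tree_edge (h : OE G r par d lo up) {v : V} (hv : v ≠ r) :
    ∃ e, lo e = v ∧ up e = par v :=
  h.surj v (par v) (h.rt.adj v hv) (by have := h.rt.dep v hv; omega)

lemma OE.head_struct (h : OE G r par d lo up) [DecidableRel G.Adj] (hdeg : ∀ v : V, G.degree v ≤ 3)
    {v : V} (hv : v ≠ r) (hh : Head par lo up v) :
    ∃ e1 e2 : E, e1 ≠ e2 ∧ up e1 = v ∧ up e2 = v ∧ par (lo e1) = v ∧ par (lo e2) ≠ v ∧
      (∀ e, up e = v → e = e1 ∨ e = e2) ∧ (∀ e, lo e = v → up e = par v) := by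
  obtain ⟨e2, hu2, hp2⟩ := hh
  have hne2 : lo e2 ≠ v := by rw [← hu2]; exact (h.adj e2).ne
  have hanc2 : Anc par v (lo e2) := by rw [← hu2]; exact h.anc e2
  obtain ⟨c, hcr, hpc, hc⟩ := h.rt.child hanc2 hne2
  obtain ⟨e1, hl1, hu1⟩ := h.tree_edge hcr
  rw [hpc] at hu1
  have hce2 : c ≠ lo e2 := by rintro rfl; exact hp2 hpc
  have hdc : d v < d c := by have := h.rt.dep c hcr; rw [hpc] at this; omega
  have hd2 : d v < d (lo e2) := by have := h.dlt e2; rw [hu2] at this; exact this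
  have hdp : d (par v) < d v := by have := h.rt.dep v hv; omega
  have hfour : ∀ x, G.Adj v x → x = par v ∨ x = c ∨ x = lo e2 := by
    intro x hx
    by_contra hcon
    push Not at hcon
    obtain ⟨h1, h2, h3⟩ := hcon
    have hsub : ({x, par v, c, lo e2} : Finset V) ⊆ G.neighborFinset v := by
      intro y hy
      rw [mem_neighborFinset]
      simp only [Finset.mem_insert, Finset.mem_singleton] at hy
      rcases hy with rfl | rfl | rfl | rfl
      · exact hx
      · exact h.rt.adj v hv
      · have := h.rt.adj y hcr; rw [hpc] at this; exact this.symm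
      · have := h.adj e2; rw [hu2] at this; exact this.symm
    have hcard : ({x, par v, c, lo e2} : Finset V).card = 4 := by
      have hpc' : par v ≠ c := by rintro h5; rw [h5] at hdp; omega
      have hpe' : par v ≠ lo e2 := by rintro h5; rw [h5] at hdp; omega
      rw [Finset.card_insert_of_notMem (by simp [h1, h2, h3]),
        Finset.card_insert_of_notMem (by simp [hpc', hpe']),
        Finset.card_insert_of_notMem (by simp [hce2]), Finset.card_singleton]
    have h5 := Finset.card_le_card hsub
    have h6 := hdeg v
    rw [card_neighborFinset_eq_degree] at h5
    omega
  refine ⟨e1, e2, ?_, hu1, hu2, by rw [hl1, hpc], hp2, ?_, ?_⟩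
  · rintro rfl; exact hce2 hl1.symm
  · intro e he
    have hadj := h.adj e
    have hlt := h.dlt e
    rw [he] at hadj hlt
    rcases hfour _ hadj.symm with h1 | h1 | h1
    · rw [h1] at hlt; omega
    · left; exact h.inj _ _ (by rw [h1, hl1]) (by rw [he, hu1])
    · right; exact h.inj _ _ h1 (by rw [he, hu2])
  · intro e he
    have hadj := h.adj e
    have hlt := h.dlt e
    rw [he] at hadj hlt
    rcases hfour _ hadj with h1 | h1 | h1
    · exact h1
    · rw [h1] at hlt; omega
    · rw [h1] at hlt; omega

lemma OE.root_struct (h : OE G r par d lo up) [DecidableRel G.Adj] (hn : 3 ≤ Fintype.card V)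
    (h2vc : ∀ v : V, (G.induce {u : V | u ≠ v}).Connected) (hdeg : ∀ v : V, G.degree v ≤ 3) :
    ∃ e0, up e0 = r ∧ par (lo e0) = r ∧ (∀ e, up e = r → par (lo e) = r → e = e0) ∧
      ((∃ e1, e1 ≠ e0 ∧ Finset.univ.filter (fun e => up e = r) = {e0, e1}) ∨
       (∃ e1 e2, e1 ≠ e0 ∧ e2 ≠ e0 ∧ e1 ≠ e2 ∧
          Finset.univ.filter (fun e => up e = r) = {e0, e1, e2})) := by
  classical
  obtain ⟨v, hv⟩ : ∃ v, v ≠ r := by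
    by_contra hcon
    push Not at hcon
    have : Fintype.card V ≤ 1 := Fintype.card_le_one_iff.2 fun a b => (hcon a).trans (hcon b).symm
    omega
  obtain ⟨c, hcr, hpc, -⟩ := h.rt.child (h.rt.root_anc v) hv
  obtain ⟨e0, hl0, hu0⟩ := h.tree_edge hcr
  rw [hpc] at hu0
  have huniq : ∀ e, up e = r → par (lo e) = r → e = e0 := by
    intro e he hp
    refine h.inj _ _ ?_ (by rw [he, hu0])
    have hlr := h.lo_ne e
    by_contra hne
    rw [hl0] at hne
    have h1 := h.root_child h2vc hcr hpc (lo e) hlr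
    have h2 := h.rt.anc_lt h1 hne
    have h3 := h.rt.dep _ hlr
    have h4 := h.rt.dep _ hcr
    rw [hp] at h3
    rw [hpc] at h4
    omega
  refine ⟨e0, hu0, by rw [hl0, hpc], huniq, ?_⟩
  set D := Finset.univ.filter (fun e => up e = r) with hD
  have he0D : e0 ∈ D := by simp [hD, hu0]
  have hDcut : ∑ e, cutN lo up {r} e = D.card := by
    rw [Finset.card_filter]
    refine Finset.sum_congr rfl fun e _ => ?_
    have := h.lo_ne e
    simp only [cutN, Finset.mem_singleton, this, false_iff]
    by_cases h1 : up e = r <;> simp [h1]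
  have h1 := h.bridgeless hn h2vc {r}
  rw [hDcut] at h1
  have h3 : D.card ≤ 3 := by
    refine le_trans ?_ (hdeg r)
    rw [← card_neighborFinset_eq_degree]
    refine Finset.card_le_card_of_injOn lo ?_ ?_
    · intro e he
      have he' : up e = r := by simpa [hD] using he
      have := h.adj e
      rw [he'] at this
      simpa using this.symm
    · intro e he f hf hef
      have he' : up e = r := by simpa [hD] using he
      have hf' : up f = r := by simpa [hD] using hf
      exact h.inj e f hef (by rw [he', hf'])
  have h4 : D = insert e0 (D.erase e0) := (Finset.insert_erase he0D).symm
  have h5 := Finset.card_erase_of_mem he0D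
  have h6 : 0 < D.card := Finset.card_pos.2 ⟨e0, he0D⟩
  have h7 : (D.erase e0).card = 1 ∨ (D.erase e0).card = 2 := by omega
  rcases h7 with h7 | h7
  · left
    obtain ⟨e1, he1⟩ := Finset.card_eq_one.1 h7
    refine ⟨e1, ?_, by rw [h4, he1]⟩
    have : e1 ∈ D.erase e0 := by rw [he1]; simp
    exact Finset.ne_of_mem_erase this
  · right
    obtain ⟨e1, e2, h12, he1⟩ := Finset.card_eq_two.1 h7
    refine ⟨e1, e2, ?_, ?_, h12, by rw [h4, he1]⟩
    · have : e1 ∈ D.erase e0 := by rw [he1]; simp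
      exact Finset.ne_of_mem_erase this
    · have : e2 ∈ D.erase e0 := by rw [he1]; simp
      exact Finset.ne_of_mem_erase this

lemma OE.head_child (h : OE G r par d lo up) [DecidableRel G.Adj]
    (h2vc : ∀ v : V, (G.induce {u : V | u ≠ v}).Connected) (hdeg : ∀ v : V, G.degree v ≤ 3)
    {v : V} (hh : Head par lo up v) :
    ∃ e0, up e0 = v ∧ par (lo e0) = v ∧ ∀ u, Anc par v u → u ≠ v → Anc par (lo e0) u := by
  by_cases hv : v = r
  · subst hv
    obtain ⟨e, he, -⟩ := hh
    obtain ⟨c, hcr, hpc, -⟩ := h.rt.child (h.rt.root_anc (lo e)) (h.lo_ne e)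
    obtain ⟨e0, hl0, hu0⟩ := h.tree_edge hcr
    refine ⟨e0, by rw [hu0, hpc], by rw [hl0, hpc], ?_⟩
    intro u _ hu
    rw [hl0]
    exact h.root_child h2vc hcr hpc u hu
  · obtain ⟨e1, e2, -, hu1, hu2, hp1, hp2, hall, -⟩ := h.head_struct hdeg hv hh
    refine ⟨e1, hu1, hp1, ?_⟩
    intro u hu hne
    obtain ⟨c, hcr, hpc, hc⟩ := h.rt.child hu hne
    obtain ⟨e0, hl0, hu0⟩ := h.tree_edge hcr
    rcases hall e0 (by rw [hu0, hpc]) with h1 | h1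
    · rw [← h1, hl0]; exact hc
    · rw [← h1, hl0] at hp2; exact absurd hpc hp2

/-- Connectivity of the remaining edges. -/
lemma OE.conn (h : OE G r par d lo up) [DecidableRel G.Adj]
    (h2vc : ∀ v : V, (G.induce {u : V | u ≠ v}).Connected) (hdeg : ∀ v : V, G.degree v ≤ 3)
    (M : E → ℕ) (hM1 : ∀ e, ¬ Head par lo up (up e) → M e ≠ 0)
    (hM2 : ∀ v, Head par lo up v → ∃ e, up e = v ∧ M e ≠ 0)
    (A : Set V) (hA : ∀ e, M e ≠ 0 → (lo e ∈ A ↔ up e ∈ A)) :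
    ∀ n v, Fintype.card V - d v = n → ∀ u, Anc par v u → (v ∈ A ↔ u ∈ A) := by
  intro n
  induction n using Nat.strong_induction_on with
  | _ n ih =>
    intro v hvn u hu
    by_cases huv : u = v
    · rw [huv]
    have step : ∀ c, d v < d c → ∀ u, Anc par c u → (c ∈ A ↔ u ∈ A) := by
      intro c hc
      have h1 := h.rt.lt_card c
      exact ih (Fintype.card V - d c) (by omega) c rfl
    by_cases hh : Head par lo up v
    · obtain ⟨e0, hu0, hp0, hall⟩ := h.head_child h2vc hdeg hh
      obtain ⟨e, hue, hMe⟩ := hM2 v hh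
      have hd0 := h.dlt e0
      rw [hu0] at hd0
      have h1 := step (lo e0) hd0 u (hall u hu huv)
      have h2 := step (lo e0) hd0 (lo e) (hall _ (by rw [← hue]; exact h.anc e)
        (by rw [← hue]; exact (h.adj e).ne))
      have h3 := hA e hMe
      rw [hue] at h3
      tauto
    · obtain ⟨c, hcr, hpc, hc⟩ := h.rt.child hu huv
      obtain ⟨e0, hl0, hu0⟩ := h.tree_edge hcr
      rw [hpc] at hu0
      have h3 := hA e0 (hM1 e0 (by rw [hu0]; exact hh))
      rw [hl0, hu0] at h3
      have h4 := h.rt.dep c hcr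
      rw [hpc] at h4
      have h1 := step c (by omega) u hc
      tauto

end Orient
end SPW


namespace SPW

section Final

variable {V : Type*} [Fintype V] [DecidableEq V] {E : Type*} [Fintype E] [DecidableEq E]
variable {G : SimpleGraph V} {r : V} {par : V → V} {d : V → ℕ} {lo up : E → V}

lemma bd_split (y : E → ZMod 2) (v : V) : bd lo up y v =
    ∑ e ∈ Finset.univ.filter (fun e => lo e = v), y e +
    ∑ e ∈ Finset.univ.filter (fun e => up e = v), y e := by
  simp [bd, inc, mul_add, Finset.sum_add_distrib, Finset.sum_filter]

lemma OE.bd_root (h : OE G r par d lo up) (y : E → ZMod 2) : bd lo up y r =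
    ∑ e ∈ Finset.univ.filter (fun e => up e = r), y e := by
  rw [bd_split, Finset.filter_false_of_mem (fun e _ => h.lo_ne e)]
  simp

open Classical in
/-- Multiplicities of the edges in the spanning Eulerian multigraph. -/
noncomputable def mul (par : V → V) (lo up : E → V) (J : E → ZMod 2) (e : E) : ℕ :=
  if Head par lo up (up e) then
    (if J e = 0 then 1 else
      if (∀ f, up f = up e → J f = 1) ∧ par (lo e) = up e then 2 else 0)
  else (if J e = 0 then 1 else 2)

lemma z2_cases (x : ZMod 2) : x = 0 ∨ x = 1 := by revert x; decide

lemma OE.vertex_nonhead (v : V) (hh : ¬ Head par lo up v) (P : E → ℕ) (J : E → ZMod 2) :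
    ∑ e ∈ Finset.univ.filter (fun e => up e = v), (mul par lo up J e : ℤ) ≤
      ((Finset.univ.filter (fun e => up e = v)).card : ℤ) +
      ∑ e, (if up e = v then (1 : ℤ) else 0) * ((J e).val : ℤ) := by
  have h1 : ((Finset.univ.filter (fun e => up e = v)).card : ℤ) +
      ∑ e, (if up e = v then (1 : ℤ) else 0) * ((J e).val : ℤ) =
      ∑ e ∈ Finset.univ.filter (fun e => up e = v), (1 + ((J e).val : ℤ)) := by
    simp [Finset.sum_add_distrib, Finset.sum_filter]
  rw [h1]
  apply Finset.sum_le_sum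
  intro e he
  have he' : up e = v := by simpa using he
  rcases z2_cases (J e) with h2 | h2 <;> simp [mul, he', hh, h2, ZMod.val_one]

lemma OE.vertex (h : OE G r par d lo up) [DecidableRel G.Adj] (hn : 3 ≤ Fintype.card V)
    (h2vc : ∀ v : V, (G.induce {u : V | u ≠ v}).Connected) (hdeg : ∀ v : V, G.degree v ≤ 3)
    (t : V) (P : E → ℕ) (hP1 : ∀ e, P e = 0 ∨ P e = 1)
    (hP : ∀ v, bd lo up (fun e => (P e : ZMod 2)) v =
      (if v = r then 1 else 0) + (if v = t then 1 else 0)) (v : V) :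
    ∃ (a : E → ℤ) (k : ℤ),
      3 * k + ∑ e, a e * ((1 + P e : ℕ) : ℤ) ≤
        4 * ((Finset.univ.filter (fun e => up e = v ∧ par (lo e) = v)).card : ℤ) +
        ∑ e ∈ Finset.univ.filter (fun e => up e = v), (P e : ℤ) + (if v = r then 2 else 0) ∧
      ∀ J : E → ZMod 2, bd lo up J = bd lo up (fun e => ((1 + P e : ℕ) : ZMod 2)) →
        ∑ e ∈ Finset.univ.filter (fun e => up e = v), (mul par lo up J e : ℤ) ≤
          k + ∑ e, a e * ((J e).val : ℤ) := by
  classical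
  by_cases hvr : v = r
  · subst hvr
    obtain ⟨e0, hu0, hp0, huniq, hst⟩ := h.root_struct hn h2vc hdeg
    have hch : (Finset.univ.filter (fun e => up e = v ∧ par (lo e) = v)) = {e0} := by
      ext e
      simp only [Finset.mem_filter, Finset.mem_univ, true_and, Finset.mem_singleton]
      exact ⟨fun h => huniq e h.1 h.2, by rintro rfl; exact ⟨hu0, hp0⟩⟩
    have hPr := hP v
    rw [h.bd_root] at hPr
    rw [hch, Finset.card_singleton]
    have hJr : ∀ J : E → ZMod 2, bd lo up J = bd lo up (fun e => ((1 + P e : ℕ) : ZMod 2)) →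
        ∑ e ∈ Finset.univ.filter (fun e => up e = v), J e =
        ∑ e ∈ Finset.univ.filter (fun e => up e = v), ((1 + P e : ℕ) : ZMod 2) := by
      intro J hJ
      rw [← h.bd_root, ← h.bd_root, hJ]
    rcases hst with ⟨e1, h10, hD⟩ | ⟨e1, e2, h10, h20, h12, hD⟩
    · have hu1 : up e1 = v := by
        have : e1 ∈ Finset.univ.filter (fun e => up e = v) := by rw [hD]; simp
        simpa using this
      have hp1 : par (lo e1) ≠ v := fun h => h10 (huniq e1 hu1 h)
      have hh : Head par lo up v := ⟨e1, hu1, hp1⟩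
      have hall : ∀ J : E → ZMod 2, (∀ f, up f = v → J f = 1) ↔ (J e0 = 1 ∧ J e1 = 1) := by
        intro J
        refine ⟨fun h => ⟨h _ hu0, h _ hu1⟩, ?_⟩
        rintro ⟨ha, hb⟩ f hf
        have : f ∈ Finset.univ.filter (fun e => up e = v) := by simp [hf]
        rw [hD] at this
        simp only [Finset.mem_insert, Finset.mem_singleton] at this
        rcases this with rfl | rfl <;> assumption
      simp only [hD, Finset.sum_pair h10.symm] at hPr hJr ⊢
      refine ⟨fun _ => 0, if v = t then 2 else 1, ?_, ?_⟩
      · simp only [zero_mul, Finset.sum_const_zero]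
        split_ifs <;> push_cast <;> omega
      · intro J hJ
        have h3 := hJr J hJ
        simp only [zero_mul, Finset.sum_const_zero, mul, hu0, hu1, hh, hall, hp0, hp1]
        push_cast at h3
        have h4 : J e0 + J e1 = if v = t then 0 else 1 := by
          have : J e0 + J e1 = (1 + 1) + ((P e0 : ZMod 2) + P e1) := by rw [h3]; ring
          rw [this, hPr]
          split_ifs <;> first | decide | simp_all
        rcases z2_cases (J e0) with h5 | h5 <;> rcases z2_cases (J e1) with h6 | h6 <;>
          rw [h5, h6] at h4 <;>
          by_cases hvt : v = t <;> simp only [hvt, if_true, if_false] at h4 <;>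
          first
            | exact absurd h4 (by decide)
            | simp [h5, h6, hvt]
    · have hm : ∀ e, up e = v ↔ (e = e0 ∨ e = e1 ∨ e = e2) := by
        intro e
        have : e ∈ Finset.univ.filter (fun e => up e = v) ↔ e ∈ ({e0, e1, e2} : Finset E) := by
          rw [hD]
        simpa using this
      have hu1 : up e1 = v := (hm e1).2 (by simp)
      have hu2 : up e2 = v := (hm e2).2 (by simp)
      have hp1 : par (lo e1) ≠ v := fun h => h10 (huniq e1 hu1 h)
      have hp2 : par (lo e2) ≠ v := fun h => h20 (huniq e2 hu2 h)
      have hh : Head par lo up v := ⟨e1, hu1, hp1⟩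
      have hall : ∀ J : E → ZMod 2, (∀ f, up f = v → J f = 1) ↔
          (J e0 = 1 ∧ J e1 = 1 ∧ J e2 = 1) := by
        intro J
        refine ⟨fun h => ⟨h _ hu0, h _ hu1, h _ hu2⟩, ?_⟩
        rintro ⟨ha, hb, hc⟩ f hf
        rcases (hm f).1 hf with rfl | rfl | rfl <;> assumption
      have hsum3 : ∀ {R : Type} [AddCommMonoid R] (f : E → R),
          ∑ e ∈ ({e0, e1, e2} : Finset E), f e = f e0 + (f e1 + f e2) := by
        intro R _ f
        rw [Finset.sum_insert (by simp [h10.symm, h20.symm]), Finset.sum_pair h12]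
      simp only [hD, hsum3] at hPr hJr ⊢
      refine ⟨fun e => if e = e0 then (if v = t then 0 else -2) else 0,
        if v = t then 2 else 3, ?_, ?_⟩
      · simp only [ite_mul, zero_mul, Finset.sum_ite_eq', Finset.mem_univ, if_true]
        by_cases hvt : v = t
        · simp only [hvt, if_true]
          push_cast; omega
        · simp only [hvt, if_false, if_true]
          have h5 : P e0 + (P e1 + P e2) ≠ 0 := by
            intro h6
            have h7 : ((P e0 + (P e1 + P e2) : ℕ) : ZMod 2) = 0 := by rw [h6]; simp
            push_cast at h7
            rw [h7] at hPr
            simp [hvt] at hPr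
          push_cast
          omega
      · intro J hJ
        have h3 := hJr J hJ
        simp only [ite_mul, zero_mul, Finset.sum_ite_eq', Finset.mem_univ, if_true,
          mul, hu0, hu1, hu2, hh, hall, hp0, hp1, hp2]
        push_cast at h3
        have h4 : J e0 + (J e1 + J e2) = if v = t then 1 else 0 := by
          have : J e0 + (J e1 + J e2) = (1 + 1 + 1) + ((P e0 : ZMod 2) + (P e1 + P e2)) := by
            rw [h3]; ring
          rw [this, hPr]
          split_ifs <;> first | decide | simp_all
        rcases z2_cases (J e0) with h5 | h5 <;> rcases z2_cases (J e1) with h6 | h6 <;>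
          rcases z2_cases (J e2) with h7 | h7 <;> rw [h5, h6, h7] at h4 <;>
          by_cases hvt : v = t <;> simp only [hvt, if_true, if_false] at h4 <;>
          first
            | exact absurd h4 (by decide)
            | simp [h5, h6, h7, hvt, ZMod.val_one]
  by_cases hh : Head par lo up v
  · obtain ⟨e1, e2, h12, hu1, hu2, hp1, hp2, hm, hlo⟩ := h.head_struct hdeg hvr hh
    obtain ⟨T, hT1, hT2⟩ := h.tree_edge hvr
    have hch : (Finset.univ.filter (fun e => up e = v ∧ par (lo e) = v)) = {e1} := by
      ext e
      simp only [Finset.mem_filter, Finset.mem_univ, true_and, Finset.mem_singleton]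
      refine ⟨fun h => ?_, by rintro rfl; exact ⟨hu1, hp1⟩⟩
      rcases hm e h.1 with h1 | rfl
      · exact h1
      · exact absurd h.2 hp2
    have hD : (Finset.univ.filter (fun e => up e = v)) = {e1, e2} := by
      ext e
      simp only [Finset.mem_filter, Finset.mem_univ, true_and, Finset.mem_insert,
        Finset.mem_singleton]
      exact ⟨hm e, by rintro (rfl | rfl) <;> assumption⟩
    have hL : (Finset.univ.filter (fun e => lo e = v)) = {T} := by
      ext e
      simp only [Finset.mem_filter, Finset.mem_univ, true_and, Finset.mem_singleton]
      exact ⟨fun h1 => h.inj _ _ (h1.trans hT1.symm) ((hlo e h1).trans hT2.symm),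
        by rintro rfl; exact hT1⟩
    have hbd : ∀ y : E → ZMod 2, bd lo up y v = y T + (y e1 + y e2) := by
      intro y
      rw [bd_split, hL, hD, Finset.sum_singleton, Finset.sum_pair h12]
    have hall : ∀ J : E → ZMod 2, (∀ f, up f = v → J f = 1) ↔ (J e1 = 1 ∧ J e2 = 1) := by
      intro J
      refine ⟨fun h => ⟨h _ hu1, h _ hu2⟩, ?_⟩
      rintro ⟨ha, hb⟩ f hf
      rcases hm f hf with rfl | rfl <;> assumption
    have hPr := hP v
    rw [hbd] at hPr
    rw [hch, Finset.card_singleton]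
    simp only [hD, Finset.sum_pair h12, hvr, if_false] at hPr ⊢
    refine ⟨fun e => if e = T then (if v = t then -1 else 1) else 0,
        if v = t then 2 else 1, ?_, ?_⟩
    · simp only [ite_mul, zero_mul, Finset.sum_ite_eq', Finset.mem_univ, if_true]
      rcases hP1 T with h5 | h5 <;> rcases hP1 e1 with h6 | h6 <;>
          rcases hP1 e2 with h7 | h7 <;> rw [h5, h6, h7] at hPr ⊢ <;>
          by_cases hvt : v = t <;> simp only [hvt, if_true, if_false] at hPr ⊢ <;>
          first
            | exact absurd hPr (by decide)
            | norm_num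
    · intro J hJ
      have h3 : bd lo up J v = bd lo up (fun e => ((1 + P e : ℕ) : ZMod 2)) v := by rw [hJ]
      rw [hbd, hbd] at h3
      simp only [ite_mul, zero_mul, Finset.sum_ite_eq', Finset.mem_univ, if_true,
          mul, hu1, hu2, hh, hall, hp1, hp2]
      push_cast at h3
      have h4 : J T + (J e1 + J e2) = if v = t then 0 else 1 := by
        have : J T + (J e1 + J e2) = (1 + 1 + 1) + ((P T : ZMod 2) + (P e1 + P e2)) := by
          rw [h3]; ring
        rw [this, hPr]
        split_ifs <;> decide
      rcases z2_cases (J T) with h5 | h5 <;> rcases z2_cases (J e1) with h6 | h6 <;>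
          rcases z2_cases (J e2) with h7 | h7 <;> rw [h5, h6, h7] at h4 <;>
          by_cases hvt : v = t <;> simp only [hvt, if_true, if_false] at h4 <;>
          first
            | exact absurd h4 (by decide)
            | simp [h5, h6, h7, hvt, ZMod.val_one]
  · refine ⟨fun e => if up e = v then 1 else 0,
      ((Finset.univ.filter (fun e => up e = v)).card : ℤ), ?_, ?_⟩
    · have hch : (Finset.univ.filter (fun e => up e = v ∧ par (lo e) = v)) =
          Finset.univ.filter (fun e => up e = v) := by
        apply Finset.filter_congr
        intro e _
        refine ⟨fun h => h.1, fun h1 => ⟨h1, ?_⟩⟩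
        by_contra h2
        exact hh ⟨e, h1, h2⟩
      rw [hch]
      simp only [hvr, if_false, ite_mul, one_mul, zero_mul]
      rw [← Finset.sum_filter]
      push_cast
      rw [Finset.sum_add_distrib]
      simp only [Finset.sum_const, nsmul_eq_mul, mul_one]
      linarith
    · intro J _
      exact OE.vertex_nonhead v hh P J

lemma OE.sum_children (h : OE G r par d lo up) :
    ∑ v, ((Finset.univ.filter (fun e => up e = v ∧ par (lo e) = v)).card : ℤ) =
      Fintype.card V - 1 := by
  have h1 : ∑ v, ((Finset.univ.filter (fun e => up e = v ∧ par (lo e) = v)).card) =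
      (Finset.univ.filter (fun e => par (lo e) = up e)).card := by
    rw [Finset.card_eq_sum_card_fiberwise (f := up) (t := Finset.univ) (by simp)]
    apply Finset.sum_congr rfl
    intro v _
    congr 1
    ext e
    simp only [Finset.mem_filter, Finset.mem_univ, true_and]
    constructor
    · rintro ⟨rfl, h2⟩; exact ⟨h2, rfl⟩
    · rintro ⟨h2, rfl⟩; exact ⟨rfl, h2⟩
  have h2 : (Finset.univ.filter (fun e => par (lo e) = up e)).card =
      (Finset.univ.erase r).card := by
    apply Finset.card_bij (fun e _ => lo e)
    · intro e _
      simp [h.lo_ne e]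
    · intro e he f hf hef
      simp only [Finset.mem_filter, Finset.mem_univ, true_and] at he hf
      exact h.inj _ _ hef (by rw [← he, ← hf, hef])
    · intro v hv
      obtain ⟨e, he1, he2⟩ := h.tree_edge (Finset.ne_of_mem_erase hv)
      exact ⟨e, by simp [he1, he2], he1⟩
  rw [Finset.card_erase_of_mem (Finset.mem_univ r), Finset.card_univ] at h2
  have h3 : 1 ≤ Fintype.card V := Fintype.card_pos_iff.2 ⟨r⟩
  have := h1.trans h2
  zify [h3] at this
  exact this

lemma OE.multi (h : OE G r par d lo up) [DecidableRel G.Adj] (hn : 3 ≤ Fintype.card V)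
    (h2vc : ∀ v : V, (G.induce {u : V | u ≠ v}).Connected) (hdeg : ∀ v : V, G.degree v ≤ 3)
    (t : V) (P : E → ℕ) (hP1 : ∀ e, P e = 0 ∨ P e = 1)
    (hP : ∀ v, bd lo up (fun e => (P e : ZMod 2)) v =
      (if v = r then 1 else 0) + (if v = t then 1 else 0)) :
    ∃ J : E → ZMod 2, bd lo up J = bd lo up (fun e => ((1 + P e : ℕ) : ZMod 2)) ∧
      3 * ∑ e, (mul par lo up J e) + 2 ≤ 4 * Fintype.card V + ∑ e, P e := by
  choose a k hB hA using h.vertex hn h2vc hdeg t P hP1 hP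
  obtain ⟨J, hJ, hW⟩ := tj_signed lo up (fun e => 1 + P e)
    (fun e => by rcases hP1 e with h1 | h1 <;> simp [h1]) (h.bridgeless hn h2vc)
    (fun e => ∑ v, a v e)
  refine ⟨J, hJ, ?_⟩
  have hs1 : ∀ f : E → ℤ, ∑ v, ∑ e ∈ Finset.univ.filter (fun e => up e = v), f e = ∑ e, f e :=
    fun f => Finset.sum_fiberwise _ _ _
  have hs2 : ∀ f : E → ℤ, ∑ v, ∑ e, a v e * f e = ∑ e, (∑ v, a v e) * f e := by
    intro f
    rw [Finset.sum_comm]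
    simp only [Finset.sum_mul]
  have h1 := Finset.sum_le_sum (fun v (_ : v ∈ Finset.univ) => hA v J hJ)
  have h2 := Finset.sum_le_sum (fun v (_ : v ∈ Finset.univ) => hB v)
  rw [hs1, Finset.sum_add_distrib, hs2] at h1
  rw [Finset.sum_add_distrib, Finset.sum_add_distrib, Finset.sum_add_distrib, hs1, hs2,
    ← Finset.mul_sum, ← Finset.mul_sum, h.sum_children] at h2
  simp only [Finset.sum_ite_eq', Finset.mem_univ, if_true] at h2
  zify
  linarith

/-- Symmetric-pair function from an edge function. -/
lemma OE.reindex (h : OE G r par d lo up) (f : E → ZMod 2) (v : V) :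
    ∑ u, (∑ e, if s(lo e, up e) = s(v, u) then f e else 0) = bd lo up f v := by
  rw [Finset.sum_comm]
  unfold bd
  apply Finset.sum_congr rfl
  intro e _
  have h1 := sum_ind_edge (h.adj e).ne v
  have h2 : ∑ u, (if s(lo e, up e) = s(v, u) then f e else 0) =
      f e * ∑ u, (if s(lo e, up e) = s(v, u) then (1 : ZMod 2) else 0) := by
    rw [Finset.mul_sum]
    simp
  rw [h2, h1, inc]
  simp only [eq_comm]

lemma OE.expand {R : Type*} [AddCommMonoid R] (h : OE G r par d lo up) (f : Sym2 V → R)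
    (hf : ∀ u v, ¬ G.Adj u v → f s(u, v) = 0) (u v : V) :
    (∑ e, if s(lo e, up e) = s(u, v) then f s(lo e, up e) else 0) = f s(u, v) := by
  by_cases huv : G.Adj u v
  · obtain ⟨e, he⟩ := h.ex huv
    rw [Finset.sum_eq_single e]
    · simp [he]
    · intro f _ hfe
      rw [if_neg]
      intro h1
      exact hfe (h.sym_inj (h1.trans he.symm))
    · simp
  · rw [hf u v huv]
    apply Finset.sum_eq_zero
    intro e _
    split_ifs with h1
    · rw [h1, hf u v huv]
    · rfl

lemma mul_parity (J : E → ZMod 2) (e : E) : (mul par lo up J e : ZMod 2) = 1 + J e := by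
  unfold mul
  rcases z2_cases (J e) with h1 | h1 <;> rw [h1] <;> split_ifs <;> first | decide | simp_all

lemma OE.main (h : OE G r par d lo up) [DecidableRel G.Adj] (hG : G.Connected)
    (hn : 3 ≤ Fintype.card V)
    (h2vc : ∀ v : V, (G.induce {u : V | u ≠ v}).Connected) (hdeg : ∀ v : V, G.degree v ≤ 3)
    (t : V) : ∃ w : G.Walk r t, (∀ u, u ∈ w.support) ∧
      3 * w.length + 2 ≤ 4 * Fintype.card V + G.dist r t := by
  obtain ⟨p, hp⟩ := hG.exists_walk_length_eq_dist r t
  set P : E → ℕ := fun e => p.edges.count s(lo e, up e) % 2 with hPdef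
  have hPb : ∀ v, bd lo up (fun e => (P e : ZMod 2)) v =
      (if v = r then 1 else 0) + (if v = t then 1 else 0) := by
    intro v
    rw [← walk_deg p v, ← h.reindex]
    apply Finset.sum_congr rfl
    intro u _
    rw [← h.expand (fun z => ((p.edges.count z : ℕ) : ZMod 2))]
    · apply Finset.sum_congr rfl
      intro e _
      simp [hPdef]
    · intro a b hab
      rw [List.count_eq_zero_of_not_mem]
      · simp
      · intro h1
        exact hab (p.adj_of_mem_edges h1)
  have hPs : ∑ e, P e ≤ G.dist r t := by
    rw [← hp, ← sum_count_edges p]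
    have hinj : Function.Injective (fun e => s(lo e, up e)) := fun e f hef => h.sym_inj hef
    calc ∑ e, P e ≤ ∑ e, p.edges.count s(lo e, up e) :=
          Finset.sum_le_sum fun e _ => Nat.mod_le _ _
      _ = ∑ z ∈ Finset.univ.image (fun e => s(lo e, up e)), p.edges.count z := by
          rw [Finset.sum_image (fun e _ f _ hef => hinj hef)]
      _ ≤ _ := Finset.sum_le_sum_of_subset (Finset.subset_univ _)
  obtain ⟨J, hJ, hM⟩ := h.multi hn h2vc hdeg t P
    (fun e => by have := Nat.mod_lt (p.edges.count s(lo e, up e)) (show 0 < 2 by norm_num)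
                 simp only [hPdef]; omega) hPb
  set M := mul par lo up J with hMdef
  have hM1 : ∀ e, ¬ Head par lo up (up e) → M e ≠ 0 := by
    intro e he
    simp only [hMdef, mul, he, if_false]
    split_ifs <;> simp
  have hM2 : ∀ v, Head par lo up v → ∃ e, up e = v ∧ M e ≠ 0 := by
    intro v hv
    by_cases hall : ∀ f, up f = v → J f = 1
    · obtain ⟨e0, h1, h2, -⟩ := h.head_child h2vc hdeg hv
      refine ⟨e0, h1, ?_⟩
      simp only [hMdef, mul, h1, hv, if_true, h2, and_true]
      rw [if_pos hall]
      split_ifs <;> simp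
    · push Not at hall
      obtain ⟨f, hf, hf1⟩ := hall
      refine ⟨f, hf, ?_⟩
      have : J f = 0 := by
        rcases z2_cases (J f) with h1 | h1
        · exact h1
        · exact absurd h1 hf1
      simp [hMdef, mul, hf, hv, this]
  have hMpos : ∀ e, (∑ f, if s(lo f, up f) = s(lo e, up e) then M f else 0) = M e := by
    intro e
    rw [Finset.sum_eq_single e]
    · simp
    · intro f _ hfe
      rw [if_neg fun h1 => hfe (h.sym_inj h1)]
    · simp
  have heul : ∃ w : G.Walk r t, (∀ u, u ∈ w.support) ∧
      w.length ≤ ∑ z : Sym2 V, ∑ e, if s(lo e, up e) = z then M e else 0 := by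
    refine euler (G := G) (fun z => ∑ e, if s(lo e, up e) = z then M e else 0) ?_ r t ?_ ?_
    · intro u v huv
      obtain ⟨e, -, he⟩ := Finset.exists_ne_zero_of_sum_ne_zero huv
      split_ifs at he with h1
      · have := h.adj e
        rw [← SimpleGraph.mem_edgeSet, h1] at this
        exact this
      · exact absurd rfl he
    · intro v
      have h1 : ∀ u, ((∑ e, if s(lo e, up e) = s(v, u) then M e else 0 : ℕ) : ZMod 2) =
          ∑ e, if s(lo e, up e) = s(v, u) then (1 + J e) else 0 := by
        intro u
        push_cast
        apply Finset.sum_congr rfl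
        intro e _
        split_ifs
        · exact mul_parity J e
        · simp
      simp only [h1]
      rw [h.reindex (fun e => 1 + J e), ← hPb v]
      have h2 : (fun e => 1 + J e) = (fun _ => (1 : ZMod 2)) + J := rfl
      have h3 : (fun e => ((1 + P e : ℕ) : ZMod 2)) =
          (fun _ => (1 : ZMod 2)) + (fun e => (P e : ZMod 2)) := by
        funext e; simp
      rw [h2, bd_add, hJ, h3, bd_add, ← add_assoc, z2_add_self, zero_add]
    · intro A hrA hA v
      refine (h.conn h2vc hdeg M hM1 hM2 A ?_ _ r rfl v (h.rt.root_anc v)).1 hrA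
      intro e he
      rw [← hMpos e] at he
      constructor
      · intro h1
        exact hA _ _ h1 he
      · intro h1
        refine hA _ _ h1 ?_
        rw [Sym2.eq_swap (a := up e)]
        exact he
  obtain ⟨w, hw1, hw2⟩ := heul
  refine ⟨w, hw1, ?_⟩
  rw [Finset.sum_comm] at hw2
  simp only [Finset.sum_ite_eq, Finset.mem_univ, if_true] at hw2
  omega

end Final

lemma three {V : Type*} [Fintype V] [DecidableEq V] (G : SimpleGraph V) [DecidableRel G.Adj]
    (hG : G.Connected) (hn : 3 ≤ Fintype.card V)
    (h2vc : ∀ v : V, (G.induce {u : V | u ≠ v}).Connected) (hdeg : ∀ v : V, G.degree v ≤ 3)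
    (s t : V) : ∃ w : G.Walk s t, (∀ u, u ∈ w.support) ∧
      3 * w.length + 2 ≤ 4 * Fintype.card V + G.dist s t := by
  obtain ⟨par, d, hrt, hc⟩ := exists_dfs hG s
  let E := {e : V × V // G.Adj e.1 e.2 ∧ d e.2 < d e.1}
  have h : OE G s par d (fun e : E => e.1.1) (fun e : E => e.1.2) :=
    { rt := hrt
      comp := hc
      adj := fun e => e.2.1
      dlt := fun e => e.2.2
      surj := fun u v h1 h2 => ⟨⟨(u, v), h1, h2⟩, rfl, rfl⟩
      inj := fun e f h1 h2 => Subtype.ext (Prod.ext h1 h2) }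
  exact h.main hG hn h2vc hdeg t

lemma two {V : Type*} [Fintype V] [DecidableEq V] (G : SimpleGraph V)
    (hG : G.Connected) (hn : Fintype.card V = 2)
    (s t : V) : ∃ w : G.Walk s t, (∀ u, u ∈ w.support) ∧
      3 * w.length + 2 ≤ 4 * Fintype.card V + G.dist s t := by
  have : Nontrivial V := Fintype.one_lt_card_iff_nontrivial.1 (by omega)
  obtain ⟨y, hy⟩ := exists_ne s
  have hall : ∀ u, u = s ∨ u = y := by
    intro u
    by_contra hu
    push Not at hu
    have h1 : ({s, y, u} : Finset V).card = 3 := by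
      rw [Finset.card_eq_three]
      exact ⟨s, y, u, hy.symm, hu.1.symm, hu.2.symm, rfl⟩
    have := Finset.card_le_univ ({s, y, u} : Finset V)
    omega
  have hadj : G.Adj s y := by
    obtain ⟨z, hz⟩ := hG.preconnected.exists_adj_of_nontrivial s
    rcases hall z with rfl | rfl
    · exact absurd rfl hz.ne
    · exact hz
  rcases hall t with rfl | rfl
  · refine ⟨Walk.cons hadj (Walk.cons hadj.symm Walk.nil), ?_, ?_⟩
    · intro u; rcases hall u with rfl | rfl <;> simp
    · simp [hn]
  · refine ⟨Walk.cons hadj Walk.nil, ?_, ?_⟩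
    · intro u; rcases hall u with rfl | rfl <;> simp
    · simp [hn]; omega

end SPW

theorem spanning_path_walk_subcubic_two_connected
    {V : Type*} [Fintype V] [DecidableEq V]
    (G : SimpleGraph V) [DecidableRel G.Adj]
    (hn : 2 ≤ Fintype.card V)
    (hconn : G.Connected)
    (hdeg : ∀ v : V, G.degree v ≤ 3)
    (h2vc : ∀ v : V, (G.induce {u : V | u ≠ v}).Connected)
    (s t : V) :
    ∃ w : G.Walk s t, (∀ u : V, u ∈ w.support) ∧
      (w.length : ℝ) ≤ 4 * Fintype.card V / 3 - 2 / 3 + (G.dist s t : ℝ) / 3 := by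
  have key : ∃ w : G.Walk s t, (∀ u, u ∈ w.support) ∧
      3 * w.length + 2 ≤ 4 * Fintype.card V + G.dist s t := by
    rcases Nat.lt_or_ge 2 (Fintype.card V) with h | h
    · exact SPW.three G hconn h h2vc hdeg s t
    · exact SPW.two G hconn (by omega) s t
  obtain ⟨w, hw, hl⟩ := key
  refine ⟨w, hw, ?_⟩
  have : (3 : ℝ) * w.length + 2 ≤ 4 * Fintype.card V + G.dist s t := by exact_mod_cast hl
  linarith
end
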